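/- arXiv:2106.11734 — 2 statements merged into one kernel-verified Lean document; each statement's English description precedes it below -/
import Mathlib

section
/- Let f ∈ L¹(𝔻, dA) satisfy the BWMO condition. Then the average function f̂ is bounded on 𝔻 if and only if the Berezin transform f̃(z) = ∫_𝔻 f(w)·|k_z(w)|² dA(w) is bounded on 𝔻, where k_z(w) = (1 − |z|²)/(1 − w·z̄)². -/
open MeasureTheory Set

noncomputable section

/-- The normalized area measure on the plane: planar Lebesgue measure divided by `π`. -/
def dA : Measure ℂ := (ENNReal.ofReal Real.pi)⁻¹ • volume

/-- The open unit disc `𝔻`. -/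
def unitDisc : Set ℂ := {z : ℂ | ‖z‖ < 1}

/-- The argument `θ` of `z`, normalized to lie in `[0, 2π)`. -/
def theta (z : ℂ) : ℝ := toIcoMod Real.two_pi_pos 0 (Complex.arg z)

/-- The angle of `ζ`, normalized to lie in `[theta z, theta z + 2π)`;
for `ζ ∈ B(z)` this is the angle `θ̃ ∈ [θ, θ + π(1-r)]` of the paper's convention. -/
def angFrom (z ζ : ℂ) : ℝ := toIcoMod Real.two_pi_pos (theta z) (Complex.arg ζ)

/-- The polar rectangle `{ρ e^{iφ} : r₁ ≤ ρ ≤ r₂, φ₁ ≤ φ ≤ φ₂}`. -/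
def polarRect (r₁ r₂ φ₁ φ₂ : ℝ) : Set ℂ :=
  {w : ℂ | ∃ ρ φ : ℝ, r₁ ≤ ρ ∧ ρ ≤ r₂ ∧ φ₁ ≤ φ ∧ φ ≤ φ₂ ∧
    w = (ρ : ℂ) * Complex.exp ((φ : ℂ) * Complex.I)}

/-- The set `B(z)` for `z = r e^{iθ} ∈ 𝔻`. -/
def Bz (z : ℂ) : Set ℂ :=
  polarRect ‖z‖ (1 - (1 - ‖z‖) / 2) (theta z) (theta z + Real.pi * (1 - ‖z‖))

/-- The set `B(z, ζ)` for `ζ ∈ B(z)`. -/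
def Bzz (z ζ : ℂ) : Set ℂ := polarRect ‖z‖ ‖ζ‖ (theta z) (angFrom z ζ)

/-- The set `B(ζ₁, ζ₂)` for points `ζ₁ ≾ ζ₂` of `B(z)`. -/
def Bsub (z ζ₁ ζ₂ : ℂ) : Set ℂ := polarRect ‖ζ₁‖ ‖ζ₂‖ (angFrom z ζ₁) (angFrom z ζ₂)

/-- The relation `ζ₁ ≾ ζ₂` for points of `B(z)`: `ρ₁ ≤ ρ₂` and `φ₁ ≤ φ₂`. -/
def precSim (z ζ₁ ζ₂ : ℂ) : Prop := ‖ζ₁‖ ≤ ‖ζ₂‖ ∧ angFrom z ζ₁ ≤ angFrom z ζ₂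

/-- The average `f̂_K = (1/|K|) ∫_K f dA` of `f` over a set `K`. -/
def avgOn (f : ℂ → ℂ) (K : Set ℂ) : ℂ := ((dA K).toReal)⁻¹ • ∫ w in K, f w ∂dA

/-- The average function `f̂(z) = f̂_{B(z)}`. -/
def avg (f : ℂ → ℂ) (z : ℂ) : ℂ := avgOn f (Bz z)

/-- The quantity `(1/|B(z)|) |∫_{B(z,ζ)} (f(ξ) - f̂(z)) dA(ξ)|`. -/
def wQuot (f : ℂ → ℂ) (z ζ : ℂ) : ℝ :=
  ((dA (Bz z)).toReal)⁻¹ * ‖∫ ξ in Bzz z ζ, (f ξ - avg f z) ∂dA‖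

/-- The BWMO condition: `‖f‖_BWMO < ∞`. -/
def IsBWMO (f : ℂ → ℂ) : Prop := ∃ C : ℝ, ∀ z ∈ unitDisc, ∀ ζ ∈ Bz z, wQuot f z ζ ≤ C

/-- The BWMO seminorm `‖f‖_BWMO`. -/
def bwmoNorm (f : ℂ → ℂ) : ℝ :=
  sSup {c : ℝ | ∃ z ∈ unitDisc, ∃ ζ ∈ Bz z, c = wQuot f z ζ}

/-- The VWMO condition:
`(1/|B(z)|) sup_{ζ ∈ B(z)} |∫_{B(z,ζ)} (f - f̂(z)) dA| → 0` as `|z| → 1`. -/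
def IsVWMO (f : ℂ → ℂ) : Prop :=
  ∀ ε > (0:ℝ), ∃ r₀ < (1:ℝ), ∀ z ∈ unitDisc, r₀ ≤ ‖z‖ → ∀ ζ ∈ Bz z, wQuot f z ζ ≤ ε

/-- The Bergman-metric disc `D(z,1)` of radius `1` centered at `z`. -/
def Dball (z : ℂ) : Set ℂ :=
  {w : ℂ | ‖w‖ < 1 ∧ ‖(z - w) / (1 - (starRingEnd ℂ) w * z)‖ < Real.tanh 1}

/-- The hyperbolic average `f̂₁(z) = (1/|D(z,1)|) ∫_{D(z,1)} f dA` of a real-valued `f`. -/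
def avg1 (f : ℂ → ℝ) (z : ℂ) : ℝ := ((dA (Dball z)).toReal)⁻¹ * ∫ w in Dball z, f w ∂dA

/-- The mean oscillation `(1/|D(z,1)|) ∫_{D(z,1)} |f - f̂₁(z)| dA` of a real-valued `f`. -/
def meanOsc1 (f : ℂ → ℝ) (z : ℂ) : ℝ :=
  ((dA (Dball z)).toReal)⁻¹ * ∫ ξ in Dball z, |f ξ - avg1 f z| ∂dA

/-- The Berezin transform `f̃(z) = ∫_𝔻 f(w) |k_z(w)|² dA(w)`,
where `k_z(w) = (1-|z|²)/(1-w z̄)²`. -/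
def berezin (f : ℂ → ℂ) (z : ℂ) : ℂ :=
  ∫ w in unitDisc, f w * ((((1 - ‖z‖ ^ 2) ^ 2 / ‖1 - w * (starRingEnd ℂ) z‖ ^ 4 : ℝ)) : ℂ) ∂dA

/-- The example symbol of Section 4:
`f(r e^{iθ}) = (1/(r (1-r)^{b-β})) sin(1/(1-r)^b)` for `r ≥ 1/2`, and `1` for `r < 1/2`. -/
def fEx (b β : ℝ) (z : ℂ) : ℝ :=
  if ‖z‖ < 1 / 2 then 1
  else (1 / (‖z‖ * (1 - ‖z‖) ^ (b - β))) * Real.sin (1 / (1 - ‖z‖) ^ b)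

end

section
open MeasureTheory Set

/-- polar parametrization -/
noncomputable def cp (p : ℝ × ℝ) : ℂ := (p.1 : ℂ) * Complex.exp ((p.2 : ℂ) * Complex.I)

lemma cp_eq (p : ℝ × ℝ) : cp p = Complex.measurableEquivRealProd.symm (polarCoord.symm p) := by
  rw [Complex.measurableEquivRealProd_symm_polarCoord_symm_apply, Complex.polarCoord_symm_apply,
    cp, Complex.exp_mul_I]
  push_cast; rfl

lemma cp_image (s : Set (ℝ × ℝ)) :
    cp '' s = Complex.measurableEquivRealProd.symm '' (polarCoord.symm '' s) := by
  rw [image_image]; exact image_congr (fun p _ => cp_eq p)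

lemma norm_cp (p : ℝ × ℝ) (hp : 0 ≤ p.1) : ‖cp p‖ = p.1 := by
  simp [cp, Complex.norm_exp_ofReal_mul_I, abs_of_nonneg hp]

lemma continuous_cp : Continuous cp := by unfold cp; fun_prop

lemma cp_inj {p q : ℝ × ℝ} (hp : 0 < p.1) (hq : 0 < q.1) (h : cp p = cp q) :
    p.1 = q.1 ∧ ∃ n : ℤ, p.2 = q.2 + n * (2 * Real.pi) := by
  have h1 : p.1 = q.1 := by rw [← norm_cp p hp.le, ← norm_cp q hq.le, h]
  refine ⟨h1, ?_⟩
  have h2 : Complex.exp ((p.2 : ℂ) * Complex.I) = Complex.exp ((q.2 : ℂ) * Complex.I) := by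
    have : (q.1 : ℂ) ≠ 0 := by exact_mod_cast hq.ne'
    unfold cp at h
    rw [h1] at h
    exact mul_left_cancel₀ this h
  obtain ⟨n, hn⟩ := Complex.exp_eq_exp_iff_exists_int.1 h2
  refine ⟨n, ?_⟩
  have h3 : (p.2 : ℂ) = q.2 + n * (2 * Real.pi) := by
    have : ((p.2 : ℂ)) * Complex.I = (q.2 + n * (2 * Real.pi)) * Complex.I := by rw [hn]; ring
    exact mul_right_cancel₀ Complex.I_ne_zero this
  exact_mod_cast h3

lemma cp_periodic (r θ : ℝ) (n : ℤ) : cp (r, θ + n * (2 * Real.pi)) = cp (r, θ) := by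
  unfold cp
  congr 1
  rw [Complex.exp_eq_exp_iff_exists_int]
  refine ⟨n, ?_⟩
  push_cast; ring

lemma cp_injOn (c d : ℝ) (h : d - c ≤ 2 * Real.pi) : InjOn cp (Ioi 0 ×ˢ Ioc c d) := by
  rintro ⟨p1, p2⟩ ⟨hp1, hp2⟩ ⟨q1, q2⟩ ⟨hq1, hq2⟩ hpq
  obtain ⟨h1, n, h2⟩ := cp_inj (p := (p1, p2)) (q := (q1, q2)) hp1 hq1 hpq
  simp only [mem_Ioc, mem_Ioi] at *
  have hpi := Real.pi_pos
  have hn : n = 0 := by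
    have a1 : (n : ℝ) < 1 := by
      by_contra hc; push Not at hc; nlinarith
    have a2 : (-1 : ℝ) < n := by
      by_contra hc; push Not at hc; nlinarith
    have : n < 1 := by exact_mod_cast a1
    have : -1 < n := by exact_mod_cast a2
    omega
  subst hn
  simp at h2
  simp [h1, h2]

lemma volume_equiv_image (s : Set (ℝ × ℝ)) :
    volume (Complex.measurableEquivRealProd.symm '' s) = volume s := by
  rw [MeasurableEquiv.image_symm]
  exact Complex.volume_preserving_equiv_real_prod.measure_preimage_equiv s

lemma pol_int (s : Set (ℝ × ℝ)) (hs : MeasurableSet s) (h0 : ∀ p ∈ s, 0 < p.1) (hi : InjOn cp s)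
    (F : ℂ → ℂ) : ∫ w in cp '' s, F w = ∫ p in s, p.1 • F (cp p) := by
  have hi' : InjOn polarCoord.symm s := by
    intro p hp q hq h
    exact hi hp hq (by rw [cp_eq, cp_eq, h])
  rw [cp_image, (Complex.volume_preserving_equiv_real_prod.symm).setIntegral_image_emb
    Complex.measurableEquivRealProd.symm.measurableEmbedding,
    integral_image_eq_integral_abs_det_fderiv_smul volume hs
      (fun p _ => (hasFDerivAt_polarCoord_symm p).hasFDerivWithinAt) hi']
  apply setIntegral_congr_fun hs
  intro p hp
  simp only [det_fderivPolarCoordSymm, abs_of_pos (h0 p hp), cp_eq]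

lemma pol_integrable (s : Set (ℝ × ℝ)) (hs : MeasurableSet s) (h0 : ∀ p ∈ s, 0 < p.1)
    (hi : InjOn cp s) (F : ℂ → ℂ) (hF : IntegrableOn F (cp '' s)) :
    IntegrableOn (fun p => p.1 • F (cp p)) s := by
  have hi' : InjOn polarCoord.symm s := by
    intro p hp q hq h
    exact hi hp hq (by rw [cp_eq, cp_eq, h])
  rw [cp_image, (Complex.volume_preserving_equiv_real_prod.symm).integrableOn_image
    Complex.measurableEquivRealProd.symm.measurableEmbedding,
    integrableOn_image_iff_integrableOn_abs_det_fderiv_smul volume hs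
      (fun p _ => (hasFDerivAt_polarCoord_symm p).hasFDerivWithinAt) hi'] at hF
  refine hF.congr_fun ?_ hs
  intro p hp
  simp only [det_fderivPolarCoordSymm, abs_of_pos (h0 p hp), cp_eq, Function.comp]

lemma polarRect_eq (a b c d : ℝ) : polarRect a b c d = cp '' (Icc a b ×ˢ Icc c d) := by
  ext w
  simp only [polarRect, mem_image, mem_prod, mem_Icc, Prod.exists, cp, mem_ofPred_eq]
  constructor
  · rintro ⟨ρ, φ, h1, h2, h3, h4, rfl⟩; exact ⟨ρ, φ, ⟨⟨h1, h2⟩, h3, h4⟩, rfl⟩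
  · rintro ⟨ρ, φ, ⟨⟨h1, h2⟩, h3, h4⟩, rfl⟩; exact ⟨ρ, φ, h1, h2, h3, h4, rfl⟩

lemma rect_ae (a b c d : ℝ) :
    (Icc a b ×ˢ Icc c d : Set (ℝ × ℝ)) =ᵐ[volume] (Ioc a b ×ˢ Ioc c d : Set (ℝ × ℝ)) := by
  exact Measure.set_prod_ae_eq Ioc_ae_eq_Icc.symm Ioc_ae_eq_Icc.symm

lemma polarRect_ae (a b c d : ℝ) :
    polarRect a b c d =ᵐ[volume] cp '' (Ioc a b ×ˢ Ioc c d) := by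
  rw [polarRect_eq]
  have hsub : (Ioc a b ×ˢ Ioc c d : Set (ℝ × ℝ)) ⊆ Icc a b ×ˢ Icc c d :=
    prod_mono Ioc_subset_Icc_self Ioc_subset_Icc_self
  have hnull : volume ((Icc a b ×ˢ Icc c d : Set (ℝ × ℝ)) \ (Ioc a b ×ˢ Ioc c d)) = 0 :=
    (ae_le_set.1 (rect_ae a b c d).le)
  have h2 : volume (cp '' ((Icc a b ×ˢ Icc c d : Set (ℝ × ℝ)) \ (Ioc a b ×ˢ Ioc c d))) = 0 := by
    rw [cp_image, volume_equiv_image]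
    exact addHaar_image_eq_zero_of_differentiableOn_of_addHaar_eq_zero volume
      (fun p _ => (hasFDerivAt_polarCoord_symm p).differentiableAt.differentiableWithinAt) hnull
  refine Filter.EventuallyLE.antisymm ?_ (HasSubset.Subset.eventuallyLE (image_mono hsub))
  rw [ae_le_set]
  refine measure_mono_null ?_ h2
  rintro _ ⟨⟨p, hp, rfl⟩, hn⟩
  exact ⟨p, ⟨hp, fun h => hn ⟨p, h, rfl⟩⟩, rfl⟩

lemma dA_integral (s : Set ℂ) (F : ℂ → ℂ) :
    ∫ w in s, F w ∂dA = (Real.pi)⁻¹ • ∫ w in s, F w := by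
  rw [dA, Measure.restrict_smul, integral_smul_measure, ENNReal.toReal_inv,
    ENNReal.toReal_ofReal Real.pi_pos.le]

lemma polarRect_int (a b c d : ℝ) (ha : 0 ≤ a) (hcd : d - c ≤ 2 * Real.pi) (F : ℂ → ℂ) :
    ∫ w in polarRect a b c d, F w ∂dA =
      (Real.pi)⁻¹ • ∫ p in Ioc a b ×ˢ Ioc c d, p.1 • F (cp p) := by
  rw [dA_integral, setIntegral_congr_set (polarRect_ae a b c d), pol_int]
  · exact measurableSet_Ioc.prod measurableSet_Ioc
  · rintro p ⟨hp, _⟩; exact lt_of_le_of_lt ha hp.1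
  · exact (cp_injOn c d hcd).mono (prod_mono (fun x hx => lt_of_le_of_lt ha hx.1) subset_rfl)

lemma disc_image (c : ℝ) :
    cp '' (Ioo 0 1 ×ˢ Ioc c (c + 2 * Real.pi)) = unitDisc \ {0} := by
  ext w
  constructor
  · rintro ⟨p, ⟨hp, _⟩, rfl⟩
    refine ⟨?_, ?_⟩
    · simp only [unitDisc, mem_ofPred_eq]; rw [norm_cp p hp.1.le]; exact hp.2
    · intro h
      have := norm_cp p hp.1.le
      rw [mem_singleton_iff.1 h, norm_zero] at this
      exact hp.1.ne this
  · rintro ⟨h1, h2⟩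
    have h2' : w ≠ 0 := h2
    obtain ⟨k, hk⟩ : ∃ k : ℤ, toIocMod Real.two_pi_pos c (Complex.arg w) =
        Complex.arg w + k * (2 * Real.pi) := by
      refine ⟨-toIocDiv Real.two_pi_pos c (Complex.arg w), ?_⟩
      rw [toIocMod]; push_cast; simp [sub_eq_add_neg]
    refine ⟨(‖w‖, toIocMod Real.two_pi_pos c (Complex.arg w)),
      ⟨⟨norm_pos_iff.2 h2', h1⟩, toIocMod_mem_Ioc _ _ _⟩, ?_⟩
    rw [hk, cp_periodic, cp]
    exact Complex.norm_mul_exp_arg_mul_I w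

lemma disc_ae : unitDisc =ᵐ[volume] (unitDisc \ {0} : Set ℂ) := by
  refine (sdiff_null_ae_eq_self ?_).symm
  simp

lemma disc_int (c : ℝ) (F : ℂ → ℂ) : ∫ w in unitDisc, F w ∂dA =
    (Real.pi)⁻¹ • ∫ p in Ioo 0 1 ×ˢ Ioc c (c + 2 * Real.pi), p.1 • F (cp p) := by
  rw [dA_integral, setIntegral_congr_set disc_ae, ← disc_image c, pol_int]
  · exact measurableSet_Ioo.prod measurableSet_Ioc
  · rintro p ⟨hp, _⟩; exact hp.1
  · exact (cp_injOn c (c + 2 * Real.pi) (by simp)).mono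
      (prod_mono (fun x hx => hx.1) subset_rfl)

lemma integrableOn_dA (s : Set ℂ) (F : ℂ → ℂ) (h : IntegrableOn F s dA) : IntegrableOn F s := by
  rw [IntegrableOn, dA, Measure.restrict_smul] at h
  refine (integrable_smul_measure ?_ ?_).1 h
  · simp
  · simp [Real.pi_pos]

lemma disc_integrable (c : ℝ) (F : ℂ → ℂ) (h : IntegrableOn F unitDisc dA) :
    IntegrableOn (fun p => p.1 • F (cp p)) (Ioo 0 1 ×ˢ Ioc c (c + 2 * Real.pi)) := by
  apply pol_integrable
  · exact measurableSet_Ioo.prod measurableSet_Ioc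
  · rintro p ⟨hp, _⟩; exact hp.1
  · exact (cp_injOn c (c + 2 * Real.pi) (by simp)).mono
      (prod_mono (fun x hx => hx.1) subset_rfl)
  · rw [disc_image]
    exact (integrableOn_dA _ _ h).mono_set sdiff_subset

end

section
open MeasureTheory Set

lemma cp_norm_arg (w : ℂ) : cp (‖w‖, Complex.arg w) = w := by
  rw [cp]; exact Complex.norm_mul_exp_arg_mul_I w

lemma arg_cp (r θ : ℝ) (hr : 0 < r) : ∃ n : ℤ, Complex.arg (cp (r, θ)) = θ + n * (2 * Real.pi) := by
  have h := cp_norm_arg (cp (r, θ))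
  rw [norm_cp (r, θ) hr.le] at h
  exact (cp_inj (p := (r, Complex.arg (cp (r, θ)))) (q := (r, θ)) hr hr h).2

lemma theta_cp (r θ : ℝ) (hr : 0 < r) : ∃ n : ℤ, theta (cp (r, θ)) = θ + n * (2 * Real.pi) := by
  obtain ⟨n, hn⟩ := arg_cp r θ hr
  refine ⟨n - toIcoDiv Real.two_pi_pos 0 (Complex.arg (cp (r, θ))), ?_⟩
  rw [theta, toIcoMod]
  push_cast
  rw [zsmul_eq_mul]
  linarith

lemma cp_theta (z : ℂ) : cp (‖z‖, theta z) = z := by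
  conv_rhs => rw [← cp_norm_arg z]
  have : theta z = Complex.arg z +
      ((-toIcoDiv Real.two_pi_pos 0 (Complex.arg z) : ℤ) : ℝ) * (2 * Real.pi) := by
    rw [theta, toIcoMod, zsmul_eq_mul]; push_cast; ring
  rw [this, cp_periodic]

lemma angFrom_cp (r θ s t : ℝ) (hr : 0 < r) (hs : 0 < s) (h1 : θ ≤ t) (h2 : t < θ + 2 * Real.pi)
    (n : ℤ) (hn : theta (cp (r, θ)) = θ + n * (2 * Real.pi)) :
    angFrom (cp (r, θ)) (cp (s, t)) = t + n * (2 * Real.pi) := by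
  obtain ⟨m, hm⟩ := arg_cp s t hs
  rw [angFrom, hn, hm, toIcoMod_eq_iff]
  refine ⟨⟨by linarith, by linarith⟩, m - n, ?_⟩
  rw [zsmul_eq_mul]; push_cast; ring

lemma polarRect_shift (a b c d : ℝ) (n : ℤ) :
    polarRect a b (c + n * (2 * Real.pi)) (d + n * (2 * Real.pi)) = polarRect a b c d := by
  rw [polarRect_eq, polarRect_eq]
  ext w
  constructor
  · rintro ⟨⟨p, q⟩, ⟨h1, h2⟩, rfl⟩
    refine ⟨(p, q - n * (2 * Real.pi)), ⟨h1, ?_⟩, ?_⟩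
    · simp only [mem_Icc] at *; constructor <;> linarith
    · rw [← cp_periodic p _ n]; congr 2; ring
  · rintro ⟨⟨p, q⟩, ⟨h1, h2⟩, rfl⟩
    refine ⟨(p, q + n * (2 * Real.pi)), ⟨h1, ?_⟩, ?_⟩
    · simp only [mem_Icc] at *; constructor <;> linarith
    · rw [← cp_periodic p q n]

lemma Bz_cp (r θ : ℝ) (hr : 0 < r) :
    Bz (cp (r, θ)) = polarRect r (1 - (1 - r) / 2) θ (θ + Real.pi * (1 - r)) := by
  obtain ⟨n, hn⟩ := theta_cp r θ hr
  rw [Bz, hn, norm_cp (r, θ) hr.le, ← polarRect_shift _ _ θ _ n]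
  congr 1; simp only; ring

lemma Bzz_cp (r θ s t : ℝ) (hr : 0 < r) (hs : 0 < s) (h1 : θ ≤ t) (h2 : t < θ + 2 * Real.pi) :
    Bzz (cp (r, θ)) (cp (s, t)) = polarRect r s θ t := by
  obtain ⟨n, hn⟩ := theta_cp r θ hr
  rw [Bzz, hn, norm_cp (r, θ) hr.le, norm_cp (s, t) hs.le, angFrom_cp r θ s t hr hs h1 h2 n hn,
    polarRect_shift]

lemma rect_int (a b c d : ℝ) (hab : a ≤ b) (hcd : c ≤ d) :
    ∫ p in (Ioc a b ×ˢ Ioc c d : Set (ℝ × ℝ)), p.1 = (b ^ 2 - a ^ 2) / 2 * (d - c) := by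
  have h := setIntegral_prod_mul (μ := (volume : Measure ℝ)) (ν := (volume : Measure ℝ))
    (fun x : ℝ => x) (fun _ : ℝ => (1 : ℝ)) (Ioc a b) (Ioc c d)
  simp only [mul_one] at h
  rw [← Measure.volume_eq_prod] at h
  rw [h, ← intervalIntegral.integral_of_le hab, integral_id]
  simp [hcd]

lemma polarRect_meas (a b c d : ℝ) (ha : 0 ≤ a) (hab : a ≤ b) (hcd : c ≤ d)
    (h2 : d - c ≤ 2 * Real.pi) :
    (dA (polarRect a b c d)).toReal = (Real.pi)⁻¹ * ((b ^ 2 - a ^ 2) / 2 * (d - c)) := by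
  have h := polarRect_int a b c d ha h2 (fun _ => 1)
  rw [setIntegral_const] at h
  have h3 : ∫ p in (Ioc a b ×ˢ Ioc c d : Set (ℝ × ℝ)), p.1 • (1 : ℂ) =
      (((b ^ 2 - a ^ 2) / 2 * (d - c) : ℝ) : ℂ) := by
    rw [← rect_int a b c d hab hcd, ← integral_complex_ofReal]
    simp
  rw [h3] at h
  simp only [Complex.real_smul, mul_one] at h
  rw [Measure.real] at h
  exact_mod_cast h

/-- `f` in polar coordinates, with Jacobian. -/
noncomputable def hp (f : ℂ → ℂ) (p : ℝ × ℝ) : ℂ := p.1 • f (cp p)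

/-- The average function in polar coordinates, `x = 1 - r`. -/
noncomputable def Ap (f : ℂ → ℂ) (x θ : ℝ) : ℂ := avg f (cp (1 - x, θ))

lemma Bz_meas (x θ : ℝ) (hx : 0 < x) (hx1 : x < 1) :
    (dA (Bz (cp (1 - x, θ)))).toReal = x ^ 2 * (4 - 3 * x) / 8 := by
  have hpi := Real.pi_pos
  rw [Bz_cp _ _ (by linarith), polarRect_meas]
  · field_simp; ring
  · linarith
  · linarith
  · nlinarith
  · nlinarith

lemma bwmo_polar (f : ℂ → ℂ) (hb : IsBWMO f) : ∃ C : ℝ, 0 ≤ C ∧ ∀ x θ s t : ℝ, 0 < x → x < 1 →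
    1 - x ≤ s → s ≤ 1 - x / 2 → θ ≤ t → t ≤ θ + Real.pi * x →
    ‖∫ p in Ioc (1 - x) s ×ˢ Ioc θ t, (hp f p - p.1 • Ap f x θ)‖ ≤ C * x ^ 2 := by
  obtain ⟨C, hC⟩ := hb
  refine ⟨|C| * Real.pi, by positivity, ?_⟩
  intro x θ s t hx hx1 h1 h2 h3 h4
  have hpi := Real.pi_pos
  have hz : cp (1 - x, θ) ∈ unitDisc := by
    simp only [unitDisc, mem_ofPred_eq]; rw [norm_cp]; simp [hx]; simp only; linarith
  have hζ : cp (s, t) ∈ Bz (cp (1 - x, θ)) := by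
    rw [Bz_cp _ _ (by linarith), polarRect_eq]
    refine ⟨(s, t), ⟨⟨h1, ?_⟩, h3, ?_⟩, rfl⟩
    · simp only; linarith
    · simp only; linarith
  have h := hC _ hz _ hζ
  have hpix : Real.pi * x < Real.pi := by nlinarith
  rw [wQuot, Bzz_cp _ _ _ _ (by linarith) (by linarith) h3 (by linarith), Bz_meas x θ hx hx1,
    polarRect_int _ _ _ _ (by linarith) (by linarith), norm_smul, norm_inv, Real.norm_of_nonneg hpi.le] at h
  have h5 : ∀ p : ℝ × ℝ, hp f p - p.1 • Ap f x θ = p.1 • (f (cp p) - avg f (cp (1 - x, θ))) := by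
    intro p; rw [hp, Ap, smul_sub]
  simp_rw [h5]
  have hm : 0 < x ^ 2 * (4 - 3 * x) / 8 := by
    have : 0 < 4 - 3 * x := by linarith
    positivity
  rw [inv_mul_le_iff₀ hm, inv_mul_le_iff₀ hpi] at h
  refine h.trans ?_
  have : C ≤ |C| := le_abs_self C
  have h6 : x ^ 2 * (4 - 3 * x) / 8 ≤ x ^ 2 := by nlinarith [sq_nonneg x]
  calc _ ≤ Real.pi * (x ^ 2 * (4 - 3 * x) / 8 * |C|) := by gcongr
    _ ≤ Real.pi * (x ^ 2 * |C|) := by gcongr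
    _ = _ := by ring

lemma Bz_sub (z : ℂ) (hz : z ∈ unitDisc) : Bz z ⊆ unitDisc := by
  simp only [unitDisc, mem_ofPred_eq] at hz
  rw [Bz, polarRect_eq]
  rintro _ ⟨p, ⟨h1, h2⟩, rfl⟩
  simp only [unitDisc, mem_ofPred_eq]
  rw [norm_cp]
  · linarith [h1.2]
  · exact (norm_nonneg z).trans h1.1

lemma avg_center (f : ℂ → ℂ) (hf : IntegrableOn f unitDisc dA) :
    ∃ M : ℝ, 0 ≤ M ∧ ∀ z, ‖z‖ ≤ 1 / 2 → ‖avg f z‖ ≤ M := by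
  refine ⟨32 * ∫ w in unitDisc, ‖f w‖ ∂dA, mul_nonneg (by norm_num) (integral_nonneg (fun _ => norm_nonneg _)), ?_⟩
  intro z hz
  have hpi := Real.pi_pos
  have hz1 : z ∈ unitDisc := by simp only [unitDisc, mem_ofPred_eq]; linarith
  have hz0 := norm_nonneg z
  have hm : (dA (Bz z)).toReal = (1 - ‖z‖) ^ 2 * (4 - 3 * (1 - ‖z‖)) / 8 := by
    rw [Bz, polarRect_meas]
    · field_simp; ring
    · exact hz0
    · linarith
    · nlinarith
    · nlinarith
  rw [avg, avgOn, norm_smul, norm_inv, Real.norm_of_nonneg ENNReal.toReal_nonneg, hm]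
  have h1 : (1 : ℝ) / 32 ≤ (1 - ‖z‖) ^ 2 * (4 - 3 * (1 - ‖z‖)) / 8 := by
    have : (1:ℝ)/4 ≤ (1 - ‖z‖) ^ 2 := by nlinarith
    nlinarith
  have h2 : ‖∫ w in Bz z, f w ∂dA‖ ≤ ∫ w in unitDisc, ‖f w‖ ∂dA := by
    refine (norm_integral_le_integral_norm _).trans ?_
    apply setIntegral_mono_set hf.norm
    · exact Filter.Eventually.of_forall (fun _ => norm_nonneg _)
    · exact (Bz_sub z hz1).eventuallyLE
  have h3 : ((1 - ‖z‖) ^ 2 * (4 - 3 * (1 - ‖z‖)) / 8)⁻¹ ≤ 32 := by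
    rw [inv_le_comm₀ (by linarith) (by norm_num)]; linarith
  gcongr

/-- The squared modulus of `1 - ρ s e^{iψ}`. -/
noncomputable def Nf (s ρ ψ : ℝ) : ℝ := 1 - 2 * ρ * s * Real.cos ψ + ρ ^ 2 * s ^ 2

lemma berezin_polar (f : ℂ → ℂ) (s θ : ℝ) (hs : 0 ≤ s) :
    berezin f (cp (s, θ)) = (Real.pi)⁻¹ •
      ∫ p in Ioo 0 1 ×ˢ Ioc (θ - Real.pi) (θ + Real.pi),
        hp f p * ((1 - s ^ 2) ^ 2 * (Nf s p.1 (p.2 - θ) ^ 2)⁻¹ : ℝ) := by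
  rw [berezin, disc_int (θ - Real.pi)]
  have : θ - Real.pi + 2 * Real.pi = θ + Real.pi := by ring
  rw [this]
  congr 2
  ext p
  rw [hp, norm_cp (s, θ) hs]
  have hN : ‖1 - cp p * (starRingEnd ℂ) (cp (s, θ))‖ ^ 2 = Nf s p.1 (p.2 - θ) := by
    have h1 : cp p * (starRingEnd ℂ) (cp (s, θ)) = 
      ((p.1 * s : ℝ) : ℂ) * Complex.exp ((p.2 - θ : ℝ) * Complex.I) := by
      simp only [cp, map_mul, Complex.conj_ofReal, ← Complex.exp_conj, Complex.conj_I]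
      push_cast
      rw [show ((p.2 : ℂ) - θ) * Complex.I = p.2 * Complex.I + θ * -Complex.I by ring, Complex.exp_add]
      ring
    rw [h1, ← Complex.normSq_eq_norm_sq, Complex.normSq_apply]
    simp only [Complex.sub_re, Complex.sub_im, Complex.one_re, Complex.one_im, Complex.re_ofReal_mul,
      Complex.im_ofReal_mul, Complex.exp_ofReal_mul_I_re, Complex.exp_ofReal_mul_I_im, Nf]
    linear_combination (p.1 * s) ^ 2 * Real.sin_sq_add_cos_sq (p.2 - θ)
  have h4 : ‖1 - cp p * (starRingEnd ℂ) (cp (s, θ))‖ ^ 4 = Nf s p.1 (p.2 - θ) ^ 2 := by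
    rw [← hN]; ring
  rw [h4, smul_mul_assoc, div_eq_mul_inv]

end

section
open MeasureTheory Set

lemma split_left {E : Type*} [NormedAddCommGroup E] [NormedSpace ℝ E] {G : ℝ × ℝ → E} {a b e : ℝ} {T : Set ℝ} (hT : MeasurableSet T) (hab : a ≤ b)
    (hbe : b ≤ e) (hG : IntegrableOn G (Ioc a e ×ˢ T)) :
    ∫ p in Ioc a e ×ˢ T, G p = (∫ p in Ioc a b ×ˢ T, G p) + ∫ p in Ioc b e ×ˢ T, G p := by
  rw [← Ioc_union_Ioc_eq_Ioc hab hbe, union_prod] at *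
  rw [setIntegral_union _ (measurableSet_Ioc.prod hT) hG.left_of_union hG.right_of_union]
  rw [Set.disjoint_prod]
  left
  rw [Set.disjoint_left]
  intro x h1 h2
  exact absurd h1.2 (not_le.2 h2.1)

lemma split_right {E : Type*} [NormedAddCommGroup E] [NormedSpace ℝ E] {G : ℝ × ℝ → E} {a b e : ℝ} {T : Set ℝ} (hT : MeasurableSet T) (hab : a ≤ b)
    (hbe : b ≤ e) (hG : IntegrableOn G (T ×ˢ Ioc a e)) :
    ∫ p in T ×ˢ Ioc a e, G p = (∫ p in T ×ˢ Ioc a b, G p) + ∫ p in T ×ˢ Ioc b e, G p := by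
  rw [← Ioc_union_Ioc_eq_Ioc hab hbe, prod_union] at *
  rw [setIntegral_union _ (hT.prod measurableSet_Ioc) hG.left_of_union hG.right_of_union]
  rw [Set.disjoint_prod]
  right
  rw [Set.disjoint_left]
  intro x h1 h2
  exact absurd h1.2 (not_le.2 h2.1)

/-- The polar-coordinate form of the hypotheses. -/
structure PH (h : ℝ × ℝ → ℂ) (A : ℝ → ℝ → ℂ) (C M : ℝ) : Prop where
  hC : 0 ≤ C
  hM : 0 ≤ M
  hI : ∀ c, IntegrableOn h (Ioo 0 1 ×ˢ Ioc c (c + 2 * Real.pi))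
  hB : ∀ x θ s t : ℝ, 0 < x → x < 1 →
    1 - x ≤ s → s ≤ 1 - x / 2 → θ ≤ t → t ≤ θ + Real.pi * x →
    ‖∫ p in Ioc (1 - x) s ×ˢ Ioc θ t, (h p - p.1 • A x θ)‖ ≤ C * x ^ 2
  hA : ∀ θ, ‖A (1 / 2) θ‖ ≤ M

variable {h : ℝ × ℝ → ℂ} {A : ℝ → ℝ → ℂ} {C M : ℝ}

lemma rect_finite (a b c d : ℝ) : volume (Ioc a b ×ˢ Ioc c d : Set (ℝ × ℝ)) ≠ ⊤ := by
  rw [Measure.volume_eq_prod, Measure.prod_prod]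
  exact ENNReal.mul_ne_top (by simp) (by simp)

lemma rho_integrable (a b c d : ℝ) (v : ℂ) :
    IntegrableOn (fun p : ℝ × ℝ => p.1 • v) (Ioc a b ×ˢ Ioc c d) := by
  have : IntegrableOn (fun p : ℝ × ℝ => p.1 • v) (Icc a b ×ˢ Icc c d) :=
    ContinuousOn.integrableOn_compact (isCompact_Icc.prod isCompact_Icc) (by fun_prop)
  exact this.mono_set (prod_mono Ioc_subset_Icc_self Ioc_subset_Icc_self)

lemma PH.rint (H : PH h A C M) (a b c d : ℝ) (ha : 0 ≤ a) (hb : b < 1)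
    (hcd : d - c ≤ 2 * Real.pi) : IntegrableOn h (Ioc a b ×ˢ Ioc c d) := by
  refine (H.hI c).mono_set (prod_mono ?_ ?_)
  · intro x hx; exact ⟨ha.trans_lt hx.1, hx.2.trans_lt hb⟩
  · intro x hx; exact ⟨hx.1, by linarith [hx.2]⟩

lemma PH.sint (H : PH h A C M) (v : ℂ) (a b c d : ℝ) (ha : 0 ≤ a) (hb : b < 1)
    (hcd : d - c ≤ 2 * Real.pi) :
    IntegrableOn (fun p => h p - p.1 • v) (Ioc a b ×ˢ Ioc c d) :=
  Integrable.sub (H.rint a b c d ha hb hcd) (rho_integrable a b c d v)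

lemma PH.sub4 (H : PH h A C M) {x θ a b c d : ℝ} (hx : 0 < x) (hx1 : x < 1) (h1 : 1 - x ≤ a)
    (hab : a ≤ b) (h2 : b ≤ 1 - x / 2) (h3 : θ ≤ c) (hcd : c ≤ d) (h4 : d ≤ θ + Real.pi * x) :
    ‖∫ p in Ioc a b ×ˢ Ioc c d, (h p - p.1 • A x θ)‖ ≤ 4 * C * x ^ 2 := by
  have hpi := Real.pi_pos
  have hpix : Real.pi * x < Real.pi := by nlinarith
  have e1 := split_left (G := fun p => h p - p.1 • A x θ) (T := Ioc θ d) measurableSet_Ioc h1 hab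
    (H.sint _ _ _ _ _ (by linarith) (by linarith) (by linarith))
  have e2 := split_right (G := fun p => h p - p.1 • A x θ) (T := Ioc a b) measurableSet_Ioc h3 hcd
    (H.sint _ _ _ _ _ (by linarith) (by linarith) (by linarith))
  have e3 := split_left (G := fun p => h p - p.1 • A x θ) (T := Ioc θ c) measurableSet_Ioc h1 hab
    (H.sint _ _ _ _ _ (by linarith) (by linarith) (by linarith))
  have b1 := H.hB x θ b d hx hx1 (by linarith) (by linarith) (by linarith) (by linarith)
  have b2 := H.hB x θ a d hx hx1 (by linarith) (by linarith) (by linarith) (by linarith)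
  have b3 := H.hB x θ b c hx hx1 (by linarith) (by linarith) (by linarith) (by linarith)
  have b4 := H.hB x θ a c hx hx1 (by linarith) (by linarith) (by linarith) (by linarith)
  set I1 := ∫ p in Ioc (1 - x) b ×ˢ Ioc θ d, (h p - p.1 • A x θ)
  set I2 := ∫ p in Ioc (1 - x) a ×ˢ Ioc θ d, (h p - p.1 • A x θ)
  set I3 := ∫ p in Ioc (1 - x) b ×ˢ Ioc θ c, (h p - p.1 • A x θ)
  set I4 := ∫ p in Ioc (1 - x) a ×ˢ Ioc θ c, (h p - p.1 • A x θ)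
  have e : ∫ p in Ioc a b ×ˢ Ioc c d, (h p - p.1 • A x θ) = (I1 - I2) - (I3 - I4) := by
    rw [e1, e3, e2]; ring
  rw [e]
  have := norm_sub_le (I1 - I2) (I3 - I4)
  have := norm_sub_le I1 I2
  have := norm_sub_le I3 I4
  linarith

lemma PH.compare (H : PH h A C M) {x θ x' θ' a b c d : ℝ} (hx : 0 < x) (hx1 : x < 1)
    (hx' : 0 < x') (hx1' : x' < 1) (hab : a ≤ b) (hcd : c ≤ d)
    (h1 : 1 - x ≤ a) (h2 : b ≤ 1 - x / 2) (h3 : θ ≤ c) (h4 : d ≤ θ + Real.pi * x)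
    (h1' : 1 - x' ≤ a) (h2' : b ≤ 1 - x' / 2) (h3' : θ' ≤ c) (h4' : d ≤ θ' + Real.pi * x') :
    ‖A x θ - A x' θ'‖ * ((b ^ 2 - a ^ 2) / 2 * (d - c)) ≤ 4 * C * x ^ 2 + 4 * C * x' ^ 2 := by
  have hpi := Real.pi_pos
  have hpix : Real.pi * x < Real.pi := by nlinarith
  have i1 := H.sub4 hx hx1 h1 hab h2 h3 hcd h4
  have i2 := H.sub4 hx' hx1' h1' hab h2' h3' hcd h4'
  have e : (∫ p in Ioc a b ×ˢ Ioc c d, (h p - p.1 • A x' θ')) -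
      (∫ p in Ioc a b ×ˢ Ioc c d, (h p - p.1 • A x θ)) =
      ((b ^ 2 - a ^ 2) / 2 * (d - c)) • (A x θ - A x' θ') := by
    rw [← integral_sub (H.sint _ _ _ _ _ (by linarith) (by linarith) (by linarith))
      (H.sint _ _ _ _ _ (by linarith) (by linarith) (by linarith)), ← rect_int a b c d hab hcd,
      ← integral_smul_const]
    congr 1
    ext p
    rw [smul_sub]; ring
  have n := norm_sub_le (∫ p in Ioc a b ×ˢ Ioc c d, (h p - p.1 • A x' θ'))
    (∫ p in Ioc a b ×ˢ Ioc c d, (h p - p.1 • A x θ))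
  have hpos : 0 ≤ (b ^ 2 - a ^ 2) / 2 * (d - c) := by
    have : 0 ≤ b ^ 2 - a ^ 2 := by nlinarith
    have : 0 ≤ d - c := by linarith
    positivity
  rw [e, norm_smul, Real.norm_of_nonneg hpos] at n
  linarith

lemma PH.step1 (H : PH h A C M) {x x' θ : ℝ} (hx : 0 < x) (hx1 : x ≤ 1 / 2)
    (h1 : 3 / 4 * x ≤ x') (h2 : x' ≤ x) : ‖A x θ - A x' θ‖ ≤ 32 * C := by
  have hpi := Real.pi_gt_three
  have hC := H.hC
  have c := H.compare (x := x) (θ := θ) (x' := x') (θ' := θ) (a := 1 - x') (b := 1 - x / 2)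
    (c := θ) (d := θ + Real.pi * x') hx (by linarith) (by linarith) (by linarith) (by linarith)
    (by nlinarith) (by linarith) (by linarith) le_rfl (by nlinarith) (by linarith) (by linarith)
    le_rfl (by linarith)
  have w : x ^ 2 / 4 ≤ ((1 - x / 2) ^ 2 - (1 - x') ^ 2) / 2 * (θ + Real.pi * x' - θ) := by
    have : x / 8 ≤ ((1 - x / 2) ^ 2 - (1 - x') ^ 2) / 2 := by nlinarith
    have : 2 * x ≤ θ + Real.pi * x' - θ := by nlinarith
    calc x ^ 2 / 4 = x / 8 * (2 * x) := by ring
      _ ≤ _ := by gcongr; linarith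
  have : x' ^ 2 ≤ x ^ 2 := by nlinarith
  have : ‖A x θ - A x' θ‖ * (x ^ 2 / 4) ≤ 8 * C * x ^ 2 := by
    have := mul_le_mul_of_nonneg_left w (norm_nonneg (A x θ - A x' θ))
    nlinarith
  have hx2 : 0 < x ^ 2 := by positivity
  nlinarith

lemma PH.step2 (H : PH h A C M) {x θ θ' : ℝ} (hx : 0 < x) (hx1 : x ≤ 1 / 2)
    (h1 : |θ - θ'| ≤ x) : ‖A x θ - A x θ'‖ ≤ 32 * C := by
  wlog hle : θ ≤ θ' generalizing θ θ'
  · rw [norm_sub_rev]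
    exact this (by rwa [abs_sub_comm]) (by linarith)
  have hpi := Real.pi_gt_three
  have hC := H.hC
  rw [abs_le] at h1
  have c := H.compare (x := x) (θ := θ) (x' := x) (θ' := θ') (a := 1 - x) (b := 1 - x / 2)
    (c := θ') (d := θ + Real.pi * x) hx (by linarith) (by linarith) (by linarith) (by linarith)
    (by nlinarith) (by linarith) (by linarith) hle (by nlinarith) (by linarith) (by linarith)
    le_rfl (by linarith)
  have w : x ^ 2 / 4 ≤ ((1 - x / 2) ^ 2 - (1 - x) ^ 2) / 2 * (θ + Real.pi * x - θ') := by
    have : x / 8 ≤ ((1 - x / 2) ^ 2 - (1 - x) ^ 2) / 2 := by nlinarith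
    have : 2 * x ≤ θ + Real.pi * x - θ' := by nlinarith
    calc x ^ 2 / 4 = x / 8 * (2 * x) := by ring
      _ ≤ _ := by gcongr; linarith
  have : ‖A x θ - A x θ'‖ * (x ^ 2 / 4) ≤ 8 * C * x ^ 2 := by
    have := mul_le_mul_of_nonneg_left w (norm_nonneg (A x θ - A x θ'))
    nlinarith
  have hx2 : 0 < x ^ 2 := by positivity
  nlinarith

lemma PH.chain (H : PH h A C M) {θ x' : ℝ} (n : ℕ) : ∀ {x : ℝ}, 0 < x → x ≤ 1 / 2 →
    (3 / 4) ^ n * x ≤ x' → x' ≤ x → ‖A x θ - A x' θ‖ ≤ 32 * C * n := by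
  have hC := H.hC
  induction n with
  | zero =>
    intro x hx hx1 h1 h2
    have : x' = x := by simp at h1; linarith
    subst this; simp
  | succ n ih =>
    intro x hx hx1 h1 h2
    push_cast
    have hn : (0 : ℝ) ≤ n := Nat.cast_nonneg n
    by_cases hc : 3 / 4 * x ≤ x'
    · have := H.step1 (θ := θ) hx hx1 hc h2
      nlinarith [mul_nonneg hC hn]
    · push Not at hc
      have a1 := H.step1 (θ := θ) hx hx1 le_rfl (by linarith)
      have a2 := ih (x := 3 / 4 * x) (by linarith) (by linarith) (by rw [pow_succ] at h1; linarith)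
        hc.le
      have := norm_sub_le_norm_sub_add_norm_sub (A x θ) (A (3 / 4 * x) θ) (A x' θ)
      linarith

lemma PH.radial (H : PH h A C M) {θ x x' : ℝ} (hx' : 0 < x') (h1 : x' ≤ x) (hx1 : x ≤ 1 / 2) :
    ‖A x θ - A x' θ‖ ≤ 288 * C * Real.sqrt (x / x') := by
  have hC := H.hC
  have hx : 0 < x := by linarith
  set y := x / x' with hy
  have hy1 : 1 ≤ y := by rw [hy, le_div_iff₀ hx']; linarith
  have hs1 : 1 ≤ √y := by rw [Real.one_le_sqrt]; exact hy1
  set n := ⌈Real.log y / Real.log (4 / 3)⌉₊ with hn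
  have hl : (1 : ℝ) / 4 ≤ Real.log (4 / 3) := by
    have := Real.one_sub_inv_le_log_of_pos (show (0 : ℝ) < 4 / 3 by norm_num)
    norm_num at this ⊢; linarith
  have hly : 0 ≤ Real.log y := Real.log_nonneg hy1
  have hn1 : Real.log y / Real.log (4 / 3) ≤ n := Nat.le_ceil _
  have hn2 : (n : ℝ) < Real.log y / Real.log (4 / 3) + 1 :=
    Nat.ceil_lt_add_one (by positivity)
  have hlog : Real.log y ≤ 2 * √y := by
    have : Real.log y = 2 * Real.log (√y) := by rw [Real.log_sqrt (by linarith)]; ring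
    rw [this]
    have := Real.log_le_sub_one_of_pos (show 0 < √y by linarith)
    linarith
  have hd : Real.log y / Real.log (4 / 3) ≤ 8 * √y := by
    rw [div_le_iff₀ (by linarith)]
    nlinarith
  have hp : (3 / 4 : ℝ) ^ n * x ≤ x' := by
    have h2 : y ≤ (4 / 3 : ℝ) ^ n := by
      rw [div_le_iff₀ (by linarith)] at hn1
      rw [← Real.log_le_log_iff (by linarith) (by positivity), Real.log_pow]
      exact hn1
    rw [hy, div_le_iff₀ hx'] at h2
    have : (3 / 4 : ℝ) ^ n * (4 / 3) ^ n = 1 := by rw [← mul_pow]; norm_num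
    calc (3 / 4 : ℝ) ^ n * x ≤ (3 / 4) ^ n * ((4 / 3) ^ n * x') := by gcongr
      _ = ((3 / 4 : ℝ) ^ n * (4 / 3) ^ n) * x' := by ring
      _ = x' := by rw [this, one_mul]
  have := H.chain (θ := θ) n hx hx1 hp h1
  have h9 : (n : ℝ) ≤ 9 * √y := by linarith
  calc _ ≤ 32 * C * n := this
    _ ≤ 32 * C * (9 * √y) := by gcongr
    _ = _ := by ring

lemma PH.pair (H : PH h A C M) {θ φ x y L : ℝ} (hx : 0 < x) (hx1 : x ≤ 1 / 2) (hy : 0 < y)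
    (hy1 : y ≤ 1 / 2) (h1 : x ≤ L) (h2 : y ≤ L) (h3 : |θ - φ| ≤ L) :
    ‖A x θ - A y φ‖ ≤ (320 * C + 2 * M) * (√(L / x) + √(L / y)) := by
  have hC := H.hC
  have hM := H.hM
  set X := min (1 / 2) L with hX
  have hXL : X ≤ L := min_le_right _ _
  have hxX : x ≤ X := le_min hx1 h1
  have hyX : y ≤ X := le_min hy1 h2
  have hX1 : X ≤ 1 / 2 := min_le_left _ _
  have a1 := H.radial (θ := θ) hx hxX hX1
  have a2 := H.radial (θ := φ) hy hyX hX1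
  have a3 : ‖A X θ - A X φ‖ ≤ 32 * C + 2 * M := by
    rcases le_total L (1 / 2) with hc | hc
    · have : X = L := min_eq_right hc
      rw [this]
      have := H.step2 (x := L) (by linarith) hc h3
      linarith
    · have : X = 1 / 2 := min_eq_left hc
      rw [this]
      have := norm_sub_le (A (1 / 2) θ) (A (1 / 2) φ)
      have := H.hA θ
      have := H.hA φ
      linarith
  have s1 : √(X / x) ≤ √(L / x) := by gcongr
  have s2 : √(X / y) ≤ √(L / y) := by gcongr
  have s3 : 1 ≤ √(L / x) := by
    rw [Real.one_le_sqrt, le_div_iff₀ hx]; linarith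
  have s4 : 0 ≤ √(L / y) := Real.sqrt_nonneg _
  have n1 := norm_sub_le_norm_sub_add_norm_sub (A x θ) (A X θ) (A y φ)
  have n2 := norm_sub_le_norm_sub_add_norm_sub (A X θ) (A X φ) (A y φ)
  rw [norm_sub_rev (A x θ) (A X θ)] at n1
  have t1 : 288 * C * √(X / x) ≤ 288 * C * √(L / x) := by gcongr
  have t2 : 288 * C * √(X / y) ≤ 288 * C * √(L / y) := by gcongr
  have t3 : 32 * C + 2 * M ≤ (32 * C + 2 * M) * √(L / x) := by
    have : 0 ≤ 32 * C + 2 * M := by positivity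
    nlinarith
  have t4 : 0 ≤ (32 * C + 2 * M) * √(L / y) := by positivity
  linarith

end

section
open MeasureTheory Set

lemma meas_and {X : Type*} [MeasurableSpace X] {f1 g1 f2 g2 : X → ℝ} (h1 : Measurable f1)
    (h2 : Measurable g1) (h3 : Measurable f2) (h4 : Measurable g2) :
    MeasurableSet {x | f1 x ≤ g1 x ∧ f2 x ≤ g2 x} :=
  (measurableSet_le h1 h2).inter (measurableSet_le h3 h4)

lemma swap_bound {U : Type*} [MeasurableSpace U] (μ : Measure U) [SFinite μ] (γ : U → ℝ × ℝ)
    (hγ : Measurable γ) (κ : U → ℝ) (hκ : Integrable κ μ) (R : Set (ℝ × ℝ))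
    (G : ℝ × ℝ → ℂ) (hG : IntegrableOn G R) (E : ℝ)
    (hE : ∀ᵐ u ∂μ, ‖∫ p in R ∩ {p | p.1 ≤ (γ u).1 ∧ p.2 ≤ (γ u).2}, G p‖ ≤ E) :
    IntegrableOn (fun p => G p *
      ((∫ u, {u | p.1 ≤ (γ u).1 ∧ p.2 ≤ (γ u).2}.indicator κ u ∂μ : ℝ) : ℂ)) R ∧
    ‖∫ p in R, G p * ((∫ u, {u | p.1 ≤ (γ u).1 ∧ p.2 ≤ (γ u).2}.indicator κ u ∂μ : ℝ) : ℂ)‖ ≤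
      E * ∫ u, |κ u| ∂μ := by
  set S : Set ((ℝ × ℝ) × U) := {z | z.1.1 ≤ (γ z.2).1 ∧ z.1.2 ≤ (γ z.2).2} with hS
  have hSm : MeasurableSet S := 
    meas_and (by fun_prop) (by fun_prop) (by fun_prop) (by fun_prop)
  set f : (ℝ × ℝ) → U → ℂ := fun p u => S.indicator (fun z => G z.1 * (κ z.2 : ℂ)) (p, u) with hf
  have hJoint : Integrable (Function.uncurry f) ((volume.restrict R).prod μ) := by
    have h1 : Integrable (fun z : (ℝ × ℝ) × U => G z.1 * (κ z.2 : ℂ)) ((volume.restrict R).prod μ) :=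
      Integrable.mul_prod hG hκ.ofReal
    exact h1.indicator hSm
  have e1 : (fun p => G p * ((∫ u, {u | p.1 ≤ (γ u).1 ∧ p.2 ≤ (γ u).2}.indicator κ u ∂μ : ℝ) : ℂ))
      = fun p => ∫ u, f p u ∂μ := by
    ext p
    rw [← integral_complex_ofReal, ← integral_const_mul]
    congr 1
    ext u
    by_cases hc : p.1 ≤ (γ u).1 ∧ p.2 ≤ (γ u).2
    · have h1 : (p, u) ∈ S := hc
      have h2 : u ∈ {u | p.1 ≤ (γ u).1 ∧ p.2 ≤ (γ u).2} := hc
      simp only [hf, indicator_of_mem h1, indicator_of_mem h2]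
    · have h1 : (p, u) ∉ S := hc
      have h2 : u ∉ {u | p.1 ≤ (γ u).1 ∧ p.2 ≤ (γ u).2} := hc
      simp only [hf, indicator_of_notMem h1, indicator_of_notMem h2]; simp
  rw [e1]
  refine ⟨hJoint.integral_prod_left, ?_⟩
  rw [integral_integral_swap hJoint, ← integral_const_mul]
  apply norm_integral_le_of_norm_le (hκ.abs.const_mul E)
  filter_upwards [hE] with u hu
  have hTm : MeasurableSet {p : ℝ × ℝ | p.1 ≤ (γ u).1 ∧ p.2 ≤ (γ u).2} := 
    meas_and (by fun_prop) (by fun_prop) (by fun_prop) (by fun_prop)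
  have e2 : ∫ p in R, f p u =
      (∫ p in R ∩ {p | p.1 ≤ (γ u).1 ∧ p.2 ≤ (γ u).2}, G p) * (κ u : ℂ) := by
    rw [← setIntegral_indicator hTm, ← integral_mul_const]
    congr 1
    ext p
    by_cases hc : p.1 ≤ (γ u).1 ∧ p.2 ≤ (γ u).2
    · have h1 : (p, u) ∈ S := hc
      have h2 : p ∈ {p : ℝ × ℝ | p.1 ≤ (γ u).1 ∧ p.2 ≤ (γ u).2} := hc
      simp only [hf, indicator_of_mem h1, indicator_of_mem h2]
    · have h1 : (p, u) ∉ S := hc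
      have h2 : p ∉ {p : ℝ × ℝ | p.1 ≤ (γ u).1 ∧ p.2 ≤ (γ u).2} := hc
      simp only [hf, indicator_of_notMem h1, indicator_of_notMem h2]; simp
  rw [e2, norm_mul, Complex.norm_real, Real.norm_eq_abs]
  gcongr

lemma rect_inter {a b c d : ℝ} {q : ℝ × ℝ} (h1 : q.1 ≤ b) (h2 : q.2 ≤ d) :
    (Ioc a b ×ˢ Ioc c d) ∩ {p : ℝ × ℝ | p.1 ≤ q.1 ∧ p.2 ≤ q.2} = Ioc a q.1 ×ˢ Ioc c q.2 := by
  ext p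
  simp only [mem_inter_iff, mem_prod, mem_Ioc, mem_ofPred_eq]
  constructor
  · rintro ⟨⟨⟨_, _⟩, _, _⟩, _, _⟩; refine ⟨⟨?_, ?_⟩, ?_, ?_⟩ <;> assumption
  · rintro ⟨⟨_, _⟩, _, _⟩; refine ⟨⟨⟨?_, ?_⟩, ?_, ?_⟩, ?_, ?_⟩ <;> linarith

lemma ibp {a b c d E k0 k1 k2 k12 : ℝ} (hab : a ≤ b) (hcd : c ≤ d)
    (K K1 K2 K12 : ℝ → ℝ → ℝ) (G : ℝ × ℝ → ℂ) (hG : IntegrableOn G (Ioc a b ×ˢ Ioc c d))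
    (hE : ∀ s t, a ≤ s → s ≤ b → c ≤ t → t ≤ d → ‖∫ p in Ioc a s ×ˢ Ioc c t, G p‖ ≤ E)
    (hK1 : ∀ s ∈ Icc a b, ∀ t ∈ Icc c d, HasDerivAt (fun s => K s t) (K1 s t) s)
    (hK2 : ∀ t ∈ Icc c d, HasDerivAt (fun t => K b t) (K2 b t) t)
    (hK12 : ∀ s ∈ Icc a b, ∀ t ∈ Icc c d, HasDerivAt (fun t => K1 s t) (K12 s t) t)
    (c1 : ContinuousOn (fun p : ℝ × ℝ => K1 p.1 p.2) (Icc a b ×ˢ Icc c d))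
    (c2 : ContinuousOn (fun p : ℝ × ℝ => K2 p.1 p.2) (Icc a b ×ˢ Icc c d))
    (c12 : ContinuousOn (fun p : ℝ × ℝ => K12 p.1 p.2) (Icc a b ×ˢ Icc c d))
    (b0 : |K b d| ≤ k0) (b1 : ∀ s ∈ Icc a b, |K1 s d| ≤ k1) (b2 : ∀ t ∈ Icc c d, |K2 b t| ≤ k2)
    (b12 : ∀ s ∈ Icc a b, ∀ t ∈ Icc c d, |K12 s t| ≤ k12) :
    ‖∫ p in Ioc a b ×ˢ Ioc c d, G p * (K p.1 p.2 : ℂ)‖ ≤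
      E * (k0 + k1 * (b - a) + k2 * (d - c) + k12 * ((b - a) * (d - c))) := by
  have hE0 : 0 ≤ E := (norm_nonneg _).trans (hE a c le_rfl hab le_rfl hcd)
  have mb : b ∈ Icc a b := ⟨hab, le_rfl⟩
  have md : d ∈ Icc c d := ⟨hcd, le_rfl⟩
  have c1d : ContinuousOn (fun s => K1 s d) (Icc a b) :=
    c1.comp (f := fun s => (s, d)) (by fun_prop) (fun s hs => ⟨hs, md⟩)
  have c2b : ContinuousOn (fun t => K2 b t) (Icc c d) :=
    c2.comp (f := fun t => (b, t)) (by fun_prop) (fun t ht => ⟨mb, ht⟩)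
  have i1 : IntegrableOn (fun s => K1 s d) (Ioc a b) :=
    (c1d.integrableOn_compact isCompact_Icc).mono_set Ioc_subset_Icc_self
  have i2 : IntegrableOn (fun t => K2 b t) (Ioc c d) :=
    (c2b.integrableOn_compact isCompact_Icc).mono_set Ioc_subset_Icc_self
  have i12 : IntegrableOn (fun p : ℝ × ℝ => K12 p.1 p.2) (Ioc a b ×ˢ Ioc c d) :=
    (c12.integrableOn_compact (isCompact_Icc.prod isCompact_Icc)).mono_set
      (prod_mono Ioc_subset_Icc_self Ioc_subset_Icc_self)
  -- the three remainder functions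
  set T1 : ℝ × ℝ → ℝ := fun p => ∫ u in Ioc a b,
    {u | p.1 ≤ (u, d).1 ∧ p.2 ≤ (u, d).2}.indicator (fun s => K1 s d) u with hT1
  set T2 : ℝ × ℝ → ℝ := fun p => ∫ u in Ioc c d,
    {u | p.1 ≤ (b, u).1 ∧ p.2 ≤ (b, u).2}.indicator (fun t => K2 b t) u with hT2
  set T3 : ℝ × ℝ → ℝ := fun p => ∫ u in Ioc a b ×ˢ Ioc c d,
    {u : ℝ × ℝ | p.1 ≤ (id u).1 ∧ p.2 ≤ (id u).2}.indicator (fun q : ℝ × ℝ => K12 q.1 q.2) u with hT3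
  have e1 : ∀ p ∈ (Ioc a b ×ˢ Ioc c d : Set (ℝ × ℝ)), T1 p = ∫ u in p.1..b, K1 u d := by
    rintro ⟨s, t⟩ ⟨hs, ht⟩
    simp only [mem_Ioc] at hs ht
    simp only [hT1]
    rw [setIntegral_indicator, intervalIntegral.integral_of_le hs.2, ← integral_Icc_eq_integral_Ioc]
    · congr 2
      ext u; simp only [mem_inter_iff, mem_Ioc, mem_ofPred_eq, mem_Icc]
      constructor
      · rintro ⟨⟨_, _⟩, _, _⟩; constructor <;> assumption
      · rintro ⟨_, _⟩; refine ⟨⟨?_, ?_⟩, ?_, ?_⟩ <;> linarith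
    · exact meas_and (by fun_prop) (by fun_prop) (by fun_prop) (by fun_prop)
  have e2 : ∀ p ∈ (Ioc a b ×ˢ Ioc c d : Set (ℝ × ℝ)), T2 p = ∫ u in p.2..d, K2 b u := by
    rintro ⟨s, t⟩ ⟨hs, ht⟩
    simp only [mem_Ioc] at hs ht
    simp only [hT2]
    rw [setIntegral_indicator, intervalIntegral.integral_of_le ht.2, ← integral_Icc_eq_integral_Ioc]
    · congr 2
      ext u; simp only [mem_inter_iff, mem_Ioc, mem_ofPred_eq, mem_Icc]
      constructor
      · rintro ⟨⟨_, _⟩, _, _⟩; constructor <;> assumption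
      · rintro ⟨_, _⟩; refine ⟨⟨?_, ?_⟩, ?_, ?_⟩ <;> linarith
    · exact meas_and (by fun_prop) (by fun_prop) (by fun_prop) (by fun_prop)
  have e3 : ∀ p ∈ (Ioc a b ×ˢ Ioc c d : Set (ℝ × ℝ)),
      T3 p = ∫ u in p.1..b, ∫ v in p.2..d, K12 u v := by
    rintro ⟨s, t⟩ ⟨hs, ht⟩
    simp only [mem_Ioc] at hs ht
    simp only [hT3]
    have hset : (Ioc a b ×ˢ Ioc c d) ∩ {u : ℝ × ℝ | s ≤ (id u).1 ∧ t ≤ (id u).2} =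
        Icc s b ×ˢ Icc t d := by
      ext ⟨u, v⟩; simp only [mem_inter_iff, mem_Ioc, mem_ofPred_eq, mem_Icc, mem_prod, id]
      constructor
      · rintro ⟨⟨⟨_, _⟩, _, _⟩, _, _⟩; refine ⟨⟨?_, ?_⟩, ?_, ?_⟩ <;> assumption
      · rintro ⟨⟨_, _⟩, _, _⟩; refine ⟨⟨⟨?_, ?_⟩, ?_, ?_⟩, ?_, ?_⟩ <;> linarith
    rw [setIntegral_indicator, hset, setIntegral_congr_set (rect_ae s b t d),
      Measure.volume_eq_prod, setIntegral_prod, intervalIntegral.integral_of_le hs.2]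
    · simp_rw [intervalIntegral.integral_of_le ht.2]
    · rw [← Measure.volume_eq_prod]
      exact i12.mono_set (prod_mono (Ioc_subset_Ioc_left hs.1.le) (Ioc_subset_Ioc_left ht.1.le))
    · exact meas_and (by fun_prop) (by fun_prop) (by fun_prop) (by fun_prop)
  have hrep : ∀ p ∈ (Ioc a b ×ˢ Ioc c d : Set (ℝ × ℝ)),
      K p.1 p.2 = K b d - T1 p - T2 p + T3 p := by
    intro p hp
    rw [e1 p hp, e2 p hp, e3 p hp]
    obtain ⟨s, t⟩ := p
    obtain ⟨hs, ht⟩ := hp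
    simp only [mem_Ioc] at hs ht ⊢
    have us : uIcc s b ⊆ Icc a b := by
      rw [uIcc_of_le hs.2]; exact Icc_subset_Icc_left hs.1.le
    have ut : uIcc t d ⊆ Icc c d := by
      rw [uIcc_of_le ht.2]; exact Icc_subset_Icc_left ht.1.le
    have mt : t ∈ Icc c d := ⟨ht.1.le, ht.2⟩
    have c1t : ContinuousOn (fun s => K1 s t) (Icc a b) :=
      c1.comp (f := fun s => (s, t)) (by fun_prop) (fun s hs => ⟨hs, mt⟩)
    have f1 := intervalIntegral.integral_eq_sub_of_hasDerivAt (a := s) (b := b)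
      (f := fun s => K s t) (f' := fun s => K1 s t) (fun u hu => hK1 u (us hu) t mt)
      (ContinuousOn.intervalIntegrable (c1t.mono us))
    have f2 := intervalIntegral.integral_eq_sub_of_hasDerivAt (a := t) (b := d)
      (f := fun t => K b t) (f' := fun t => K2 b t) (fun u hu => hK2 u (ut hu))
      (ContinuousOn.intervalIntegrable (c2b.mono ut))
    have f3 : ∫ u in s..b, ∫ v in t..d, K12 u v = ∫ u in s..b, (K1 u d - K1 u t) := by
      apply intervalIntegral.integral_congr
      intro u hu
      have hu' := us hu
      have c12u : ContinuousOn (fun v => K12 u v) (Icc c d) :=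
        c12.comp (f := fun v => (u, v)) (by fun_prop) (fun v hv => ⟨hu', hv⟩)
      exact intervalIntegral.integral_eq_sub_of_hasDerivAt (a := t) (b := d)
        (f := fun t => K1 u t) (f' := fun t => K12 u t) (fun v hv => hK12 u hu' v (ut hv))
        (ContinuousOn.intervalIntegrable (c12u.mono ut))
    rw [intervalIntegral.integral_sub (ContinuousOn.intervalIntegrable (c1d.mono us))
      (ContinuousOn.intervalIntegrable (c1t.mono us))] at f3
    rw [f3, f1, f2]; ring
  have hRm : MeasurableSet (Ioc a b ×ˢ Ioc c d : Set (ℝ × ℝ)) :=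
    measurableSet_Ioc.prod measurableSet_Ioc
  -- bounds of the four pieces
  have B0 : ‖∫ p in Ioc a b ×ˢ Ioc c d, G p * (K b d : ℂ)‖ ≤ E * k0 := by
    rw [integral_mul_const, norm_mul, Complex.norm_real, Real.norm_eq_abs]
    have := hE b d hab le_rfl hcd le_rfl
    gcongr
  have B1 : IntegrableOn (fun p => G p * (T1 p : ℂ)) (Ioc a b ×ˢ Ioc c d) ∧
      ‖∫ p in Ioc a b ×ˢ Ioc c d, G p * (T1 p : ℂ)‖ ≤ E * (k1 * (b - a)) := by
    refine And.imp id (fun h => h.trans ?_) (swap_bound (volume.restrict (Ioc a b)) (fun u => (u, d)) (by fun_prop) _ i1 _ G hG E ?_)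
    · filter_upwards [ae_restrict_mem measurableSet_Ioc] with u hu
      rw [rect_inter (q := (u, d)) hu.2 le_rfl]
      exact hE _ _ hu.1.le hu.2 hcd le_rfl
    · gcongr
      have := setIntegral_mono_on (i1.abs) (integrableOn_const (C := k1) (by simp)) measurableSet_Ioc
        (fun u hu => b1 u (Ioc_subset_Icc_self hu))
      simpa [hab, mul_comm] using this
  have B2 : IntegrableOn (fun p => G p * (T2 p : ℂ)) (Ioc a b ×ˢ Ioc c d) ∧
      ‖∫ p in Ioc a b ×ˢ Ioc c d, G p * (T2 p : ℂ)‖ ≤ E * (k2 * (d - c)) := by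
    refine And.imp id (fun h => h.trans ?_) (swap_bound (volume.restrict (Ioc c d)) (fun u => (b, u)) (by fun_prop) _ i2 _ G hG E ?_)
    · filter_upwards [ae_restrict_mem measurableSet_Ioc] with u hu
      rw [rect_inter (q := (b, u)) le_rfl hu.2]
      exact hE _ _ hab le_rfl hu.1.le hu.2
    · gcongr
      have := setIntegral_mono_on (i2.abs) (integrableOn_const (C := k2) (by simp)) measurableSet_Ioc
        (fun u hu => b2 u (Ioc_subset_Icc_self hu))
      simpa [hcd, mul_comm] using this
  have B3 : IntegrableOn (fun p => G p * (T3 p : ℂ)) (Ioc a b ×ˢ Ioc c d) ∧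
      ‖∫ p in Ioc a b ×ˢ Ioc c d, G p * (T3 p : ℂ)‖ ≤ E * (k12 * ((b - a) * (d - c))) := by
    refine And.imp id (fun h => h.trans ?_) (swap_bound (volume.restrict (Ioc a b ×ˢ Ioc c d)) id measurable_id _ i12 _ G hG E ?_)
    · filter_upwards [ae_restrict_mem hRm] with u hu
      rw [id, rect_inter hu.1.2 hu.2.2]
      exact hE _ _ hu.1.1.le hu.1.2 hu.2.1.le hu.2.2
    · gcongr
      have := setIntegral_mono_on (i12.abs) (integrableOn_const (C := k12) (rect_finite a b c d)) hRm
        (fun u hu => b12 u.1 (Ioc_subset_Icc_self hu.1) u.2 (Ioc_subset_Icc_self hu.2))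
      refine this.trans (le_of_eq ?_)
      rw [setIntegral_const, Measure.volume_eq_prod, measureReal_prod_prod]
      simp [hab, hcd, mul_comm]
  have I0 : IntegrableOn (fun p => G p * (K b d : ℂ)) (Ioc a b ×ˢ Ioc c d) := hG.mul_const _
  have e : ∫ p in Ioc a b ×ˢ Ioc c d, G p * (K p.1 p.2 : ℂ) =
      (∫ p in Ioc a b ×ˢ Ioc c d, G p * (K b d : ℂ)) - (∫ p in Ioc a b ×ˢ Ioc c d, G p * (T1 p : ℂ))
      - (∫ p in Ioc a b ×ˢ Ioc c d, G p * (T2 p : ℂ))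
      + ∫ p in Ioc a b ×ˢ Ioc c d, G p * (T3 p : ℂ) := by
    have J1 : IntegrableOn (fun p => G p * (K b d : ℂ) - G p * (T1 p : ℂ)) (Ioc a b ×ˢ Ioc c d) :=
      Integrable.sub I0 B1.1
    have J2 : IntegrableOn (fun p => G p * (K b d : ℂ) - G p * (T1 p : ℂ) - G p * (T2 p : ℂ))
      (Ioc a b ×ˢ Ioc c d) := Integrable.sub J1 B2.1
    rw [← integral_sub I0 B1.1, ← integral_sub J1 B2.1, ← integral_add J2 B3.1]
    apply setIntegral_congr_fun hRm
    intro p hp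
    simp only [hrep p hp]
    push_cast; ring
  rw [e]
  refine (norm_add_le _ _).trans ?_
  have n1 := norm_sub_le ((∫ p in Ioc a b ×ˢ Ioc c d, G p * (K b d : ℂ)) -
    (∫ p in Ioc a b ×ˢ Ioc c d, G p * (T1 p : ℂ))) (∫ p in Ioc a b ×ˢ Ioc c d, G p * (T2 p : ℂ))
  have n2 := norm_sub_le (∫ p in Ioc a b ×ˢ Ioc c d, G p * (K b d : ℂ))
    (∫ p in Ioc a b ×ˢ Ioc c d, G p * (T1 p : ℂ))
  have := B1.2
  have := B2.2
  have := B3.2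
  linarith

end

section
open MeasureTheory Set

noncomputable section

def Kf (s θ ρ φ : ℝ) : ℝ := (Nf s ρ (φ - θ) ^ 2)⁻¹

def N1 (s ρ ψ : ℝ) : ℝ := -2 * s * Real.cos ψ + 2 * ρ * s ^ 2

def N2 (s ρ ψ : ℝ) : ℝ := 2 * ρ * s * Real.sin ψ

def N12 (s ψ : ℝ) : ℝ := 2 * s * Real.sin ψ

def Kf1 (s θ ρ φ : ℝ) : ℝ := -2 * (Nf s ρ (φ - θ) ^ 3)⁻¹ * N1 s ρ (φ - θ)

def Kf2 (s θ ρ φ : ℝ) : ℝ := -2 * (Nf s ρ (φ - θ) ^ 3)⁻¹ * N2 s ρ (φ - θ)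

def Kf12 (s θ ρ φ : ℝ) : ℝ := 6 * (Nf s ρ (φ - θ) ^ 4)⁻¹ * (N1 s ρ (φ - θ) * N2 s ρ (φ - θ)) -
  2 * (Nf s ρ (φ - θ) ^ 3)⁻¹ * N12 s (φ - θ)

end

lemma Nf_eq (s ρ ψ : ℝ) : Nf s ρ ψ = (ρ * s - Real.cos ψ) ^ 2 + Real.sin ψ ^ 2 := by
  have := Real.sin_sq_add_cos_sq ψ
  unfold Nf; linear_combination (-1) * this

lemma Nf_pos {s ρ ψ : ℝ} (hs : 0 ≤ s) (hs1 : s < 1) (hρ : 0 ≤ ρ) (hρ1 : ρ ≤ 1) :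
    0 < Nf s ρ ψ := by
  have h1 : ρ * s < 1 := by nlinarith
  have h2 : 0 ≤ ρ * s := by positivity
  have h3 := Real.cos_le_one ψ
  have : 0 < (1 - ρ * s) ^ 2 := by have : 0 < 1 - ρ * s := by linarith
                                   positivity
  unfold Nf; nlinarith [mul_nonneg h2 (by linarith : 0 ≤ 1 - Real.cos ψ)]

lemma Nf_low {x ρ ψ : ℝ} (hx : 0 < x) (hx1 : x ≤ 1 / 2) (hρ : 1 / 2 ≤ ρ) (hρ1 : ρ ≤ 1)
    (hψ : |ψ| ≤ Real.pi) : ((x + |ψ| + (1 - ρ)) / 6) ^ 2 ≤ Nf (1 - x) ρ ψ := by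
  have hc := Real.cos_le_one_sub_mul_cos_sq hψ
  have hpi := Real.pi_pos
  have hpi4 := Real.pi_lt_four
  have hp : 1 / 8 ≤ 2 / Real.pi ^ 2 := by
    rw [div_le_div_iff₀ (by norm_num) (by positivity)]; nlinarith
  have h1 : 1 / 8 * ψ ^ 2 ≤ 1 - Real.cos ψ := by nlinarith [sq_nonneg ψ]
  have h2 : 1 / 4 ≤ ρ * (1 - x) := by nlinarith
  have h3 : 1 / 16 * |ψ| ^ 2 ≤ 2 * (ρ * (1 - x)) * (1 - Real.cos ψ) := by
    rw [sq_abs]; nlinarith [sq_nonneg ψ]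
  have h4 : (1 - ρ) + x / 2 ≤ 1 - ρ * (1 - x) := by nlinarith
  have e : Nf (1 - x) ρ ψ = (1 - ρ * (1 - x)) ^ 2 + 2 * (ρ * (1 - x)) * (1 - Real.cos ψ) := by
    unfold Nf; ring
  rw [e]
  set u := 1 - ρ * (1 - x)
  set v := |ψ| with hv
  have hv0 : 0 ≤ v := abs_nonneg _
  have hL : x + v + (1 - ρ) ≤ 2 * u + v := by linarith
  have hL0 : 0 ≤ x + v + (1 - ρ) := by linarith
  have : (x + v + (1 - ρ)) ^ 2 ≤ (2 * u + v) ^ 2 := by gcongr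
  nlinarith [sq_nonneg (u - v), sq_nonneg (4 * u - v / 4), sq_nonneg u, sq_nonneg v]

lemma Nf_up {x ρ ψ : ℝ} (hx : 0 < x) (hx1 : x ≤ 1 / 2) (hρ : 1 / 2 ≤ ρ) (hρ1 : ρ ≤ 1) :
    Nf (1 - x) ρ ψ ≤ (x + |ψ| + (1 - ρ)) ^ 2 := by
  have hc := Real.one_sub_sq_div_two_le_cos (x := ψ)
  have h2 : 0 ≤ ρ * (1 - x) := by nlinarith
  have h2' : ρ * (1 - x) ≤ 1 := by nlinarith
  have h3 : 2 * (ρ * (1 - x)) * (1 - Real.cos ψ) ≤ |ψ| ^ 2 := by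
    rw [sq_abs]; nlinarith [sq_nonneg ψ]
  have e : Nf (1 - x) ρ ψ = (1 - ρ * (1 - x)) ^ 2 + 2 * (ρ * (1 - x)) * (1 - Real.cos ψ) := by
    unfold Nf; ring
  have hu : 1 - ρ * (1 - x) ≤ x + (1 - ρ) := by nlinarith
  have hu2 : (1 - ρ * (1 - x)) ^ 2 ≤ (x + (1 - ρ)) ^ 2 := by
    apply pow_le_pow_left₀ (by linarith) hu
  rw [e]
  nlinarith [mul_nonneg (abs_nonneg ψ) (by linarith : 0 ≤ x + (1 - ρ))]

lemma N1_le {s ρ ψ : ℝ} (hs : 0 ≤ s) (hs1 : s ≤ 1) : |N1 s ρ ψ| ≤ 2 * √(Nf s ρ ψ) := by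
  have h : √(Nf s ρ ψ) * 2 = √(4 * Nf s ρ ψ) := by
    rw [Real.sqrt_mul (by norm_num), show (4:ℝ) = 2 ^ 2 by norm_num, Real.sqrt_sq (by norm_num)]
    ring
  rw [mul_comm, h]
  apply Real.abs_le_sqrt
  rw [Nf_eq]
  have : N1 s ρ ψ ^ 2 = 4 * (s ^ 2 * (ρ * s - Real.cos ψ) ^ 2) := by unfold N1; ring
  rw [this]
  have : s ^ 2 * (ρ * s - Real.cos ψ) ^ 2 ≤ 1 * (ρ * s - Real.cos ψ) ^ 2 := by
    gcongr; nlinarith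
  nlinarith [sq_nonneg (Real.sin ψ)]

lemma N2_le {s ρ ψ : ℝ} (hs : 0 ≤ s) (hs1 : s ≤ 1) (hρ : 0 ≤ ρ) (hρ1 : ρ ≤ 1) :
    |N2 s ρ ψ| ≤ 2 * √(Nf s ρ ψ) := by
  have h : √(Nf s ρ ψ) * 2 = √(4 * Nf s ρ ψ) := by
    rw [Real.sqrt_mul (by norm_num), show (4:ℝ) = 2 ^ 2 by norm_num, Real.sqrt_sq (by norm_num)]
    ring
  rw [mul_comm, h]
  apply Real.abs_le_sqrt
  rw [Nf_eq]
  have : N2 s ρ ψ ^ 2 = 4 * ((ρ * s) ^ 2 * Real.sin ψ ^ 2) := by unfold N2; ring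
  rw [this]
  have h2 : ρ * s ≤ 1 := by nlinarith
  have h3 : (ρ * s) ^ 2 ≤ 1 := pow_le_one₀ (by positivity) h2
  have : (ρ * s) ^ 2 * Real.sin ψ ^ 2 ≤ 1 * Real.sin ψ ^ 2 := by
    gcongr
  nlinarith [sq_nonneg (ρ * s - Real.cos ψ)]

lemma N12_le {s ψ : ℝ} (hs : 0 ≤ s) (hs1 : s ≤ 1) : |N12 s ψ| ≤ 2 := by
  unfold N12
  rw [abs_mul, abs_of_nonneg (by positivity : 0 ≤ 2 * s)]
  nlinarith [Real.abs_sin_le_one ψ, abs_nonneg (Real.sin ψ)]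

lemma kernel_bounds {s θ ρ φ l : ℝ} (hs : 0 ≤ s) (hs1 : s < 1) (hρ : 0 ≤ ρ) (hρ1 : ρ ≤ 1)
    (hl : 0 < l) (h : l ^ 2 ≤ Nf s ρ (φ - θ)) :
    0 ≤ Kf s θ ρ φ ∧ Kf s θ ρ φ ≤ (l ^ 4)⁻¹ ∧ |Kf1 s θ ρ φ| ≤ 4 * (l ^ 5)⁻¹ ∧
    |Kf2 s θ ρ φ| ≤ 4 * (l ^ 5)⁻¹ ∧ |Kf12 s θ ρ φ| ≤ 28 * (l ^ 6)⁻¹ := by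
  have hN : 0 < Nf s ρ (φ - θ) := Nf_pos hs hs1 hρ hρ1
  have b1 := N1_le (ρ := ρ) (ψ := φ - θ) hs hs1.le
  have b2 := N2_le (ψ := φ - θ) hs hs1.le hρ hρ1
  have b12 := N12_le (ψ := φ - θ) hs hs1.le
  unfold Kf Kf1 Kf2 Kf12
  have hn : 0 < √(Nf s ρ (φ - θ)) := Real.sqrt_pos.2 hN
  have hln : l ≤ √(Nf s ρ (φ - θ)) := Real.le_sqrt_of_sq_le h
  have hsq : Nf s ρ (φ - θ) = √(Nf s ρ (φ - θ)) ^ 2 := (Real.sq_sqrt hN.le).symm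
  generalize √(Nf s ρ (φ - θ)) = n at *
  generalize N1 s ρ (φ - θ) = n1 at *
  generalize N2 s ρ (φ - θ) = n2 at *
  generalize N12 s (φ - θ) = n12 at *
  rw [hsq]
  have i4 : (n ^ 4)⁻¹ ≤ (l ^ 4)⁻¹ := by gcongr
  have i5 : (n ^ 5)⁻¹ ≤ (l ^ 5)⁻¹ := by gcongr
  have i6 : (n ^ 6)⁻¹ ≤ (l ^ 6)⁻¹ := by gcongr
  have key : ∀ m : ℝ, |m| ≤ 2 * n → |-2 * ((n ^ 2) ^ 3)⁻¹ * m| ≤ 4 * (l ^ 5)⁻¹ := by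
    intro m hm
    have : |-2 * ((n ^ 2) ^ 3)⁻¹ * m| = 2 * (n ^ 6)⁻¹ * |m| := by
      rw [abs_mul, abs_mul, abs_of_pos (by positivity : 0 < ((n ^ 2) ^ 3)⁻¹)]
      norm_num [← pow_mul]
    rw [this]
    calc 2 * (n ^ 6)⁻¹ * |m| ≤ 2 * (n ^ 6)⁻¹ * (2 * n) := by gcongr
      _ = 4 * (n ^ 5)⁻¹ := by field_simp; ring
      _ ≤ _ := by gcongr
  refine ⟨by positivity, by rw [← pow_mul]; exact i4, key _ b1, key _ b2, ?_⟩
  refine (abs_sub _ _).trans ?_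
  have e1 : |6 * ((n ^ 2) ^ 4)⁻¹ * (n1 * n2)| ≤ 24 * (n ^ 6)⁻¹ := by
    rw [abs_mul, abs_mul n1, abs_of_pos (by positivity : 0 < 6 * ((n ^ 2) ^ 4)⁻¹)]
    calc 6 * ((n ^ 2) ^ 4)⁻¹ * (|n1| * |n2|) ≤ 6 * ((n ^ 2) ^ 4)⁻¹ * ((2 * n) * (2 * n)) := by gcongr
      _ = _ := by field_simp; ring
  have e2 : |2 * ((n ^ 2) ^ 3)⁻¹ * n12| ≤ 4 * (n ^ 6)⁻¹ := by
    rw [abs_mul, abs_of_pos (by positivity : 0 < 2 * ((n ^ 2) ^ 3)⁻¹)]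
    calc 2 * ((n ^ 2) ^ 3)⁻¹ * |n12| ≤ 2 * ((n ^ 2) ^ 3)⁻¹ * 2 := by gcongr
      _ = _ := by rw [← pow_mul]; ring
  linarith

lemma Nf_d1 (s ρ ψ : ℝ) : HasDerivAt (fun ρ => Nf s ρ ψ) (N1 s ρ ψ) ρ := by
  unfold Nf N1
  have h : HasDerivAt (fun ρ : ℝ => 1 - 2 * ρ * s * Real.cos ψ + ρ ^ 2 * s ^ 2)
      (0 - 2 * 1 * s * Real.cos ψ + (2 * ρ ^ 1 * 1) * s ^ 2) ρ :=
    ((hasDerivAt_const ρ (1:ℝ)).sub ((((hasDerivAt_id ρ).const_mul 2).mul_const s).mul_const _)).add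
      (((hasDerivAt_id ρ).pow 2).mul_const _)
  convert h using 1; ring

lemma Nf_d2 (s ρ θ φ : ℝ) : HasDerivAt (fun φ => Nf s ρ (φ - θ)) (N2 s ρ (φ - θ)) φ := by
  unfold Nf N2
  have h := ((((hasDerivAt_id φ).sub_const θ).cos.const_mul (2 * ρ * s)).const_sub 1).add_const
    (ρ ^ 2 * s ^ 2)
  refine HasDerivAt.congr_deriv h ?_
  simp only [id]; ring

lemma N1_d2 (s ρ θ φ : ℝ) : HasDerivAt (fun φ => N1 s ρ (φ - θ)) (N12 s (φ - θ)) φ := by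
  unfold N1 N12
  have h := (((hasDerivAt_id φ).sub_const θ).cos.const_mul (-2 * s)).add_const
    (2 * ρ * s ^ 2)
  refine HasDerivAt.congr_deriv h ?_
  simp only [id]; ring

lemma Kf_d1 {s θ ρ φ : ℝ} (h : Nf s ρ (φ - θ) ≠ 0) :
    HasDerivAt (fun ρ => Kf s θ ρ φ) (Kf1 s θ ρ φ) ρ := by
  unfold Kf Kf1
  have h' := ((Nf_d1 s ρ (φ - θ)).pow 2).inv (pow_ne_zero 2 h)
  refine HasDerivAt.congr_deriv h' ?_
  simp only [Pi.pow_apply]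
  field_simp
  norm_num
  ring

lemma Kf_d2 {s θ ρ φ : ℝ} (h : Nf s ρ (φ - θ) ≠ 0) :
    HasDerivAt (fun φ => Kf s θ ρ φ) (Kf2 s θ ρ φ) φ := by
  unfold Kf Kf2
  have h' := ((Nf_d2 s ρ θ φ).pow 2).inv (pow_ne_zero 2 h)
  refine HasDerivAt.congr_deriv h' ?_
  simp only [Pi.pow_apply]
  field_simp
  norm_num
  ring

lemma Kf_d12 {s θ ρ φ : ℝ} (h : Nf s ρ (φ - θ) ≠ 0) :
    HasDerivAt (fun φ => Kf1 s θ ρ φ) (Kf12 s θ ρ φ) φ := by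
  unfold Kf1 Kf12
  have h' := ((((Nf_d2 s ρ θ φ).pow 3).inv (pow_ne_zero 3 h)).const_mul (-2)).mul (N1_d2 s ρ θ φ)
  refine HasDerivAt.congr_deriv h' ?_
  simp only [Pi.pow_apply, Pi.inv_apply]
  field_simp
  push_cast
  ring

lemma Nf_cont (s θ : ℝ) : Continuous (fun p : ℝ × ℝ => Nf s p.1 (p.2 - θ)) := by
  unfold Nf; fun_prop

lemma Kf_cont {s θ : ℝ} {S : Set (ℝ × ℝ)} (h : ∀ p ∈ S, Nf s p.1 (p.2 - θ) ≠ 0) :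
    ContinuousOn (fun p : ℝ × ℝ => Kf s θ p.1 p.2) S ∧
    ContinuousOn (fun p : ℝ × ℝ => Kf1 s θ p.1 p.2) S ∧
    ContinuousOn (fun p : ℝ × ℝ => Kf2 s θ p.1 p.2) S ∧
    ContinuousOn (fun p : ℝ × ℝ => Kf12 s θ p.1 p.2) S := by
  have c := (Nf_cont s θ).continuousOn (s := S)
  have i : ∀ k : ℕ, ContinuousOn (fun p : ℝ × ℝ => (Nf s p.1 (p.2 - θ) ^ k)⁻¹) S := fun k =>
    (c.pow k).inv₀ (fun p hp => pow_ne_zero k (h p hp))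
  have a1 : ContinuousOn (fun p : ℝ × ℝ => N1 s p.1 (p.2 - θ)) S := by unfold N1; fun_prop
  have a2 : ContinuousOn (fun p : ℝ × ℝ => N2 s p.1 (p.2 - θ)) S := by unfold N2; fun_prop
  have a12 : ContinuousOn (fun p : ℝ × ℝ => N12 s (p.2 - θ)) S := by unfold N12; fun_prop
  refine ⟨i 2, ?_, ?_, ?_⟩
  · exact ((continuousOn_const.mul (i 3))).mul a1
  · exact ((continuousOn_const.mul (i 3))).mul a2
  · exact ((continuousOn_const.mul (i 4)).mul (a1.mul a2)).sub ((continuousOn_const.mul (i 3)).mul a12)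

end

section
open MeasureTheory Set

noncomputable section

def mj (x θ : ℝ) (p : ℝ × ℝ) : ℝ :=
  ((x + |p.2 - θ|) ^ 2)⁻¹ *
    (((x + (1 - p.1)) * √(x + (1 - p.1)))⁻¹ * ((√x)⁻¹ + (√(1 - p.1))⁻¹))

end

lemma rect_const (a b c d k : ℝ) (hab : a ≤ b) (hcd : c ≤ d) :
    ∫ _p in (Ioc a b ×ˢ Ioc c d : Set (ℝ × ℝ)), k = k * ((b - a) * (d - c)) := by
  rw [setIntegral_const, Measure.volume_eq_prod, measureReal_prod_prod]
  simp [hab, hcd, mul_comm]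

lemma mj_cont {x θ : ℝ} (hx : 0 < x) {S : Set (ℝ × ℝ)} (h : ∀ p ∈ S, p.1 < 1) :
    ContinuousOn (mj x θ) S := by
  have a1 : ContinuousOn (fun p : ℝ × ℝ => ((x + |p.2 - θ|) ^ 2)⁻¹) S := by
    apply ContinuousOn.inv₀ (by fun_prop)
    intro p hp
    have := abs_nonneg (p.2 - θ)
    have : 0 < x + |p.2 - θ| := by linarith
    positivity
  have a2 : ContinuousOn (fun p : ℝ × ℝ => ((x + (1 - p.1)) * √(x + (1 - p.1)))⁻¹) S := by
    apply ContinuousOn.inv₀ (by fun_prop)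
    intro p hp
    have := h p hp
    have : 0 < x + (1 - p.1) := by linarith
    positivity
  have a3 : ContinuousOn (fun p : ℝ × ℝ => (√(1 - p.1))⁻¹) S := by
    apply ContinuousOn.inv₀ (by fun_prop)
    intro p hp
    have := h p hp
    have : 0 < 1 - p.1 := by linarith
    positivity
  exact a1.mul (a2.mul (continuousOn_const.add a3))

lemma mj_int {x θ : ℝ} (hx : 0 < x) {a b c d : ℝ} (hb : b < 1) :
    IntegrableOn (mj x θ) (Ioc a b ×ˢ Ioc c d) := by
  have : IntegrableOn (mj x θ) (Icc a b ×ˢ Icc c d) :=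
    (mj_cont hx (fun p hp => hp.1.2.trans_lt hb)).integrableOn_compact
      (isCompact_Icc.prod isCompact_Icc)
  exact this.mono_set (prod_mono Ioc_subset_Icc_self Ioc_subset_Icc_self)

variable {h : ℝ × ℝ → ℂ} {A : ℝ → ℝ → ℂ} {C M : ℝ}

lemma final_ineq {C M y l L S m0 : ℝ} (hC : 0 ≤ C) (hM : 0 ≤ M) (hy : 0 < y) (hl : 0 < l)
    (hL : L = 54 * l) (hyL : y ≤ L) (hS : 1 ≤ S) (hm : m0 = 1 / 25 * (L ^ 4)⁻¹ * S) :
    C * y ^ 2 * ((l ^ 4)⁻¹ + 4 * (l ^ 5)⁻¹ * (y / 2) + 4 * (l ^ 5)⁻¹ * (Real.pi * y) +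
      28 * (l ^ 6)⁻¹ * (y / 2 * (Real.pi * y))) +
      ((320 * C + 2 * M) * S * (l ^ 4)⁻¹) * (y / 2 * (Real.pi * y)) ≤
    25 * 54 ^ 4 * (170000 * C + 4 * M) * (m0 * (y / 2 * (Real.pi * y))) := by
  have hpi := Real.pi_gt_three
  have hpi4 := Real.pi_lt_four
  have e1 : (l ^ 5)⁻¹ * y ≤ 54 * (l ^ 4)⁻¹ := by
    have : (l ^ 5)⁻¹ * y ≤ (l ^ 5)⁻¹ * (54 * l) := by gcongr; linarith
    refine this.trans (le_of_eq ?_); field_simp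
  have e2 : (l ^ 6)⁻¹ * y ^ 2 ≤ 2916 * (l ^ 4)⁻¹ := by
    have : (l ^ 6)⁻¹ * y ^ 2 ≤ (l ^ 6)⁻¹ * (54 * l) ^ 2 := by gcongr; linarith
    refine this.trans (le_of_eq ?_); field_simp; norm_num
  have e3 : 25 * 54 ^ 4 * m0 = (l ^ 4)⁻¹ * S := by
    rw [hm, hL]; field_simp
  have p4 : 0 < (l ^ 4)⁻¹ := by positivity
  have p5 : 0 < (l ^ 5)⁻¹ * y := by positivity
  have p6 : 0 < (l ^ 6)⁻¹ * y ^ 2 := by positivity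
  have b1 : (l ^ 4)⁻¹ + 4 * (l ^ 5)⁻¹ * (y / 2) + 4 * (l ^ 5)⁻¹ * (Real.pi * y) +
      28 * (l ^ 6)⁻¹ * (y / 2 * (Real.pi * y)) ≤ 165000 * (l ^ 4)⁻¹ := by
    have q1 : Real.pi * ((l ^ 5)⁻¹ * y) ≤ 4 * (54 * (l ^ 4)⁻¹) := by gcongr
    have q2 : Real.pi * ((l ^ 6)⁻¹ * y ^ 2) ≤ 4 * (2916 * (l ^ 4)⁻¹) := by gcongr
    have : 4 * (l ^ 5)⁻¹ * (Real.pi * y) = 4 * (Real.pi * ((l ^ 5)⁻¹ * y)) := by ring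
    have : 28 * (l ^ 6)⁻¹ * (y / 2 * (Real.pi * y)) = 14 * (Real.pi * ((l ^ 6)⁻¹ * y ^ 2)) := by ring
    linarith
  have b2 : C * y ^ 2 * (165000 * (l ^ 4)⁻¹) ≤ C * y ^ 2 * (165000 * ((l ^ 4)⁻¹ * S)) := by
    gcongr; nlinarith
  have e4 : 25 * 54 ^ 4 * (170000 * C + 4 * M) * (m0 * (y / 2 * (Real.pi * y))) =
      (170000 * C + 4 * M) * ((l ^ 4)⁻¹ * S) * (y ^ 2 * (Real.pi / 2)) := by
    rw [← e3]; ring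
  rw [e4]
  have b3 : C * y ^ 2 * ((l ^ 4)⁻¹ + 4 * (l ^ 5)⁻¹ * (y / 2) + 4 * (l ^ 5)⁻¹ * (Real.pi * y) +
      28 * (l ^ 6)⁻¹ * (y / 2 * (Real.pi * y))) ≤ C * y ^ 2 * (165000 * (l ^ 4)⁻¹) := by gcongr
  set w := (l ^ 4)⁻¹ * S * y ^ 2 with hw
  have hw0 : 0 ≤ w := by positivity
  have e5 : ((320 * C + 2 * M) * S * (l ^ 4)⁻¹) * (y / 2 * (Real.pi * y)) =
    (320 * C + 2 * M) * w * (Real.pi / 2) := by rw [hw]; ring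
  have e6 : (170000 * C + 4 * M) * ((l ^ 4)⁻¹ * S) * (y ^ 2 * (Real.pi / 2)) =
    (170000 * C + 4 * M) * w * (Real.pi / 2) := by rw [hw]; ring
  have e7 : C * y ^ 2 * (165000 * ((l ^ 4)⁻¹ * S)) = 165000 * C * w := by rw [hw]; ring
  rw [e5, e6]
  rw [e7] at b2
  have : 165000 * C * w ≤ 165000 * C * w * (Real.pi / 2) := by
    have : 0 ≤ 165000 * C * w := by positivity
    nlinarith
  have : 0 ≤ (2 * M + 4680 * C) * w * (Real.pi / 2) := by positivity
  nlinarith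

lemma tile_geom {x θ y φ ρ ψ : ℝ} (hx : 0 < x) (hx1 : x ≤ 1 / 2) (hy : 0 < y) (hy1 : y ≤ 1 / 2)
    (h1 : θ - Real.pi ≤ φ) (h2 : φ + Real.pi * y ≤ θ + Real.pi)
    (hρ : ρ ∈ Icc (1 - y) (1 - y / 2)) (hψ : ψ ∈ Icc φ (φ + Real.pi * y)) :
    ((x + |φ - θ| + y) / 54) ^ 2 ≤ Nf (1 - x) ρ (ψ - θ) ∧
    x + |ψ - θ| ≤ 5 * (x + |φ - θ| + y) := by
  have hpi4 := Real.pi_lt_d2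
  have hpi := Real.pi_pos
  have hd : |(ψ - θ) - (φ - θ)| ≤ Real.pi * y := by
    rw [abs_le]; constructor <;> nlinarith [hψ.1, hψ.2, mul_pos hpi hy]
  have t1 := abs_sub_abs_le_abs_sub (ψ - θ) (φ - θ)
  have t2 := abs_sub_abs_le_abs_sub (φ - θ) (ψ - θ)
  rw [abs_sub_comm (φ - θ)] at t2
  have n1 := abs_nonneg (φ - θ)
  have n2 := abs_nonneg (ψ - θ)
  have hpy : Real.pi * y ≤ 3.15 * y := by gcongr
  refine ⟨?_, by linarith⟩
  refine le_trans ?_ (Nf_low hx hx1 (by linarith [hρ.1]) (by linarith [hρ.2]) ?_)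
  · apply pow_le_pow_left₀ (by positivity)
    linarith [hρ.2]
  · rw [abs_le]; constructor <;> linarith [hψ.1, hψ.2]

lemma PH.tile (H : PH h A C M) {x θ y φ : ℝ} (hx : 0 < x) (hx1 : x ≤ 1 / 2) (hy : 0 < y)
    (hy1 : y ≤ 1 / 2) (h1 : θ - Real.pi ≤ φ) (h2 : φ + Real.pi * y ≤ θ + Real.pi) :
    ‖∫ p in Ioc (1 - y) (1 - y / 2) ×ˢ Ioc φ (φ + Real.pi * y),
      (h p - p.1 • A x θ) * (Kf (1 - x) θ p.1 p.2 : ℂ)‖ ≤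
    25 * 54 ^ 4 * (170000 * C + 4 * M) *
      ∫ p in Ioc (1 - y) (1 - y / 2) ×ˢ Ioc φ (φ + Real.pi * y), mj x θ p := by
  have hpi4 := Real.pi_lt_four
  have hpi := Real.pi_pos
  have hC := H.hC
  have hM := H.hM
  have hpy : 0 < Real.pi * y := by positivity
  have hab : 1 - y ≤ 1 - y / 2 := by linarith
  have hcd : φ ≤ φ + Real.pi * y := by linarith
  set L := x + |φ - θ| + y with hL
  have n1 := abs_nonneg (φ - θ)
  have hL0 : 0 < L := by linarith
  set l := L / 54 with hl
  have hl0 : 0 < l := by positivity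
  set S := √(L / x) + √(L / y) with hS
  set T : Set (ℝ × ℝ) := Ioc (1 - y) (1 - y / 2) ×ˢ Ioc φ (φ + Real.pi * y) with hT
  have hTm : MeasurableSet T := measurableSet_Ioc.prod measurableSet_Ioc
  have hlow : ∀ ρ ∈ Icc (1 - y) (1 - y / 2), ∀ ψ ∈ Icc φ (φ + Real.pi * y),
      l ^ 2 ≤ Nf (1 - x) ρ (ψ - θ) := fun ρ hρ ψ hψ => (tile_geom hx hx1 hy hy1 h1 h2 hρ hψ).1
  have hkb := fun ρ (hρ : ρ ∈ Icc (1 - y) (1 - y / 2)) ψ (hψ : ψ ∈ Icc φ (φ + Real.pi * y)) =>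
    kernel_bounds (s := 1 - x) (θ := θ) (ρ := ρ) (φ := ψ) (by linarith) (by linarith)
      (by linarith [hρ.1]) (by linarith [hρ.2]) hl0 (hlow ρ hρ ψ hψ)
  have hne : ∀ p ∈ Icc (1 - y) (1 - y / 2) ×ˢ Icc φ (φ + Real.pi * y),
      Nf (1 - x) p.1 (p.2 - θ) ≠ 0 := fun p hp =>
    (lt_of_lt_of_le (by positivity) (hlow p.1 hp.1 p.2 hp.2)).ne'
  have hc := Kf_cont (s := 1 - x) (θ := θ) hne
  have mb : (1 - y / 2) ∈ Icc (1 - y) (1 - y / 2) := ⟨hab, le_rfl⟩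
  have md : (φ + Real.pi * y) ∈ Icc φ (φ + Real.pi * y) := ⟨hcd, le_rfl⟩
  have hG : IntegrableOn (fun p => h p - p.1 • A y φ) T :=
    H.sint _ _ _ _ _ (by linarith) (by linarith) (by nlinarith)
  have I1 := ibp (E := C * y ^ 2) (k0 := (l ^ 4)⁻¹) (k1 := 4 * (l ^ 5)⁻¹) (k2 := 4 * (l ^ 5)⁻¹)
    (k12 := 28 * (l ^ 6)⁻¹) hab hcd (Kf (1 - x) θ) (Kf1 (1 - x) θ) (Kf2 (1 - x) θ)
    (Kf12 (1 - x) θ) (fun p => h p - p.1 • A y φ) hG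
    (fun s t a1 a2 a3 a4 => H.hB y φ s t hy (by linarith) a1 a2 a3 a4)
    (fun s hs t ht => Kf_d1 (hne (s, t) ⟨hs, ht⟩))
    (fun t ht => Kf_d2 (hne (_, t) ⟨mb, ht⟩))
    (fun s hs t ht => Kf_d12 (hne (s, t) ⟨hs, ht⟩)) hc.2.1 hc.2.2.1 hc.2.2.2
    (by rw [abs_of_nonneg (hkb _ mb _ md).1]; exact (hkb _ mb _ md).2.1)
    (fun s hs => (hkb s hs _ md).2.2.1) (fun t ht => (hkb _ mb t ht).2.2.2.1)
    (fun s hs t ht => (hkb s hs t ht).2.2.2.2)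
  have e1 : 1 - y / 2 - (1 - y) = y / 2 := by ring
  have e2 : φ + Real.pi * y - φ = Real.pi * y := by ring
  rw [e1, e2] at I1
  have hsub : T ⊆ Icc (1 - y) (1 - y / 2) ×ˢ Icc φ (φ + Real.pi * y) :=
    prod_mono Ioc_subset_Icc_self Ioc_subset_Icc_self
  have hpair := H.pair (θ := φ) (φ := θ) (x := y) (y := x) (L := L) hy hy1 hx hx1 (by linarith)
    (by linarith) (by linarith)
  rw [add_comm (√(L / y))] at hpair
  have hvol : volume.real T = y / 2 * (Real.pi * y) := by
    have := rect_const (1 - y) (1 - y / 2) φ (φ + Real.pi * y) 1 hab hcd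
    rw [setIntegral_const, e1, e2] at this
    simpa using this
  have I2 : ‖∫ p in T, (p.1 • (A y φ - A x θ)) * (Kf (1 - x) θ p.1 p.2 : ℂ)‖ ≤
      ((320 * C + 2 * M) * S * (l ^ 4)⁻¹) * (y / 2 * (Real.pi * y)) := by
    rw [← hvol]
    apply norm_setIntegral_le_of_norm_le_const (rect_finite _ _ _ _).lt_top
    intro p hp
    have hp' := hsub hp
    have hk := hkb p.1 hp'.1 p.2 hp'.2
    rw [norm_mul, norm_smul, Complex.norm_real, Real.norm_eq_abs, Real.norm_eq_abs,
      abs_of_nonneg hk.1, abs_of_nonneg (by linarith [hp'.1.1] : 0 ≤ p.1)]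
    have : p.1 * ‖A y φ - A x θ‖ ≤ 1 * ((320 * C + 2 * M) * S) := by
      gcongr
      linarith [hp'.1.2]
    rw [one_mul] at this
    gcongr
    · exact hk.1
    · exact hk.2.1
  have hKint : ∀ g : ℝ × ℝ → ℂ, IntegrableOn g T →
      IntegrableOn (fun p => g p * (Kf (1 - x) θ p.1 p.2 : ℂ)) T := by
    intro g hg
    refine Integrable.mul_bdd (c := (l ^ 4)⁻¹) hg ?_ ?_
    · apply ContinuousOn.aestronglyMeasurable _ hTm
      exact Complex.continuous_ofReal.comp_continuousOn (hc.1.mono hsub)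
    · filter_upwards [ae_restrict_mem hTm] with p hp
      have hk := hkb p.1 (hsub hp).1 p.2 (hsub hp).2
      rw [Complex.norm_real, Real.norm_eq_abs, abs_of_nonneg hk.1]; exact hk.2.1
  have e3 : ∫ p in T, (h p - p.1 • A x θ) * (Kf (1 - x) θ p.1 p.2 : ℂ) =
      (∫ p in T, (h p - p.1 • A y φ) * (Kf (1 - x) θ p.1 p.2 : ℂ)) +
      ∫ p in T, (p.1 • (A y φ - A x θ)) * (Kf (1 - x) θ p.1 p.2 : ℂ) := by
    rw [← integral_add (hKint _ hG) (hKint _ (rho_integrable _ _ _ _ _))]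
    congr 1; ext p
    rw [smul_sub]; ring
  set m0 := ((5 * L) ^ 2)⁻¹ * ((L * √L)⁻¹ * ((√x)⁻¹ + (√y)⁻¹)) with hm0
  have hm0e : m0 = 1 / 25 * (L ^ 4)⁻¹ * S := by
    rw [hm0, hS, Real.sqrt_div' _ hx.le, Real.sqrt_div' _ hy.le]
    have hq : √L ^ 2 = L := Real.sq_sqrt hL0.le
    have hq0 : 0 < √L := Real.sqrt_pos.2 hL0
    have hx0 : 0 < √x := Real.sqrt_pos.2 hx
    have hy0 : 0 < √y := Real.sqrt_pos.2 hy
    generalize √L = q at *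
    rw [← hq]
    field_simp
    norm_num
  have I3 : m0 * (y / 2 * (Real.pi * y)) ≤ ∫ p in T, mj x θ p := by
    have := rect_const (1 - y) (1 - y / 2) φ (φ + Real.pi * y) m0 hab hcd
    rw [e1, e2] at this
    rw [← this]
    apply setIntegral_mono_on (integrableOn_const (rect_finite _ _ _ _)) (mj_int hx (by linarith)) hTm
    intro p hp
    have hp' := hsub hp
    have g := (tile_geom hx hx1 hy hy1 h1 h2 hp'.1 hp'.2).2
    have g1 := hp'.1.1
    have g2 := hp'.1.2
    have n3 := abs_nonneg (p.2 - θ)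
    have hp1 : 0 < 1 - p.1 := by linarith
    have q1 : x + (1 - p.1) ≤ L := by linarith
    have q2 : 1 - p.1 ≤ y := by linarith
    have q3 : 0 < x + (1 - p.1) := by linarith
    have q4 : 0 < x + |p.2 - θ| := by linarith
    rw [hm0, mj]
    gcongr
  rw [e3]
  refine (norm_add_le _ _).trans ((add_le_add I1 I2).trans ?_)
  have hS1 : 1 ≤ S := by
    have : 1 ≤ √(L / x) := by rw [Real.one_le_sqrt, le_div_iff₀ hx]; linarith
    have : 0 ≤ √(L / y) := Real.sqrt_nonneg _
    linarith
  refine (final_ineq hC hM hy hl0 (by rw [hl]; ring) (by linarith) hS1 hm0e).trans ?_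
  gcongr

end

section
open MeasureTheory Set

lemma Nf_low0 {s ρ ψ : ℝ} (hs : 0 ≤ s) (hs1 : s < 1) (hρ : 0 ≤ ρ) (hρ1 : ρ ≤ 1) :
    (1 - s) ^ 2 ≤ Nf s ρ ψ := by
  have h1 : ρ * s ≤ s := by nlinarith
  have h2 : 0 ≤ ρ * s := by positivity
  have h3 := Real.cos_le_one ψ
  have : (1 - s) ^ 2 ≤ (1 - ρ * s) ^ 2 := by
    apply pow_le_pow_left₀ <;> linarith
  unfold Nf; nlinarith [mul_nonneg h2 (by linarith : 0 ≤ 1 - Real.cos ψ)]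

lemma K_int {s θ : ℝ} (hs : 0 ≤ s) (hs1 : s < 1) {S : Set (ℝ × ℝ)} (hSm : MeasurableSet S)
    (hS : ∀ p ∈ S, 0 ≤ p.1 ∧ p.1 ≤ 1) {g : ℝ × ℝ → ℂ} (hg : IntegrableOn g S) :
    IntegrableOn (fun p => g p * (Kf s θ p.1 p.2 : ℂ)) S := by
  have hc := (Kf_cont (s := s) (θ := θ) (S := S)
    (fun p hp => (Nf_pos hs hs1 (hS p hp).1 (hS p hp).2).ne')).1
  refine Integrable.mul_bdd (c := ((1 - s) ^ 4)⁻¹) hg ?_ ?_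
  · apply ContinuousOn.aestronglyMeasurable _ hSm
    exact Complex.continuous_ofReal.comp_continuousOn hc
  · filter_upwards [ae_restrict_mem hSm] with p hp
    have hk := kernel_bounds (s := s) (θ := θ) (ρ := p.1) (φ := p.2) hs hs1 (hS p hp).1 (hS p hp).2
      (by linarith : 0 < 1 - s) (Nf_low0 hs hs1 (hS p hp).1 (hS p hp).2)
    rw [Complex.norm_real, Real.norm_eq_abs, abs_of_nonneg hk.1]; exact hk.2.1

variable {h : ℝ × ℝ → ℂ} {A : ℝ → ℝ → ℂ} {C M : ℝ}

lemma PH.fint (H : PH h A C M) {x θ : ℝ} (hx : 0 < x) (hx1 : x ≤ 1 / 2) (v : ℂ) (a b c d : ℝ)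
    (ha : 0 ≤ a) (hb : b < 1) (hcd : d - c ≤ 2 * Real.pi) :
    IntegrableOn (fun p => (h p - p.1 • v) * (Kf (1 - x) θ p.1 p.2 : ℂ)) (Ioc a b ×ˢ Ioc c d) :=
  K_int (by linarith) (by linarith) (measurableSet_Ioc.prod measurableSet_Ioc)
    (fun p hp => ⟨ha.trans hp.1.1.le, (hp.1.2.trans_lt hb).le⟩) (H.sint v a b c d ha hb hcd)

lemma PH.annulus_aux (H : PH h A C M) {x θ y : ℝ} (hx : 0 < x) (hx1 : x ≤ 1 / 2) (hy : 0 < y)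
    (hy1 : y ≤ 1 / 2) (k : ℕ) (hk : k * y ≤ 2) :
    ‖∫ p in Ioc (1 - y) (1 - y / 2) ×ˢ Ioc (θ - Real.pi) (θ - Real.pi + k * (Real.pi * y)),
      (h p - p.1 • A x θ) * (Kf (1 - x) θ p.1 p.2 : ℂ)‖ ≤
    25 * 54 ^ 4 * (170000 * C + 4 * M) *
      ∫ p in Ioc (1 - y) (1 - y / 2) ×ˢ Ioc (θ - Real.pi) (θ - Real.pi + k * (Real.pi * y)),
        mj x θ p := by
  have hpi := Real.pi_pos
  have hpy : 0 < Real.pi * y := by positivity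
  induction k with
  | zero => simp
  | succ k ih =>
    push_cast at hk ⊢
    have hk' : k * y ≤ 2 := by linarith
    have hle : (k:ℝ) * (Real.pi * y) + Real.pi * y ≤ 2 * Real.pi := by
      have := mul_le_mul_of_nonneg_left hk hpi.le
      linarith
    have hk0 : 0 ≤ (k:ℝ) * (Real.pi * y) := by positivity
    have e : θ - Real.pi + ((k:ℝ) + 1) * (Real.pi * y) =
      θ - Real.pi + k * (Real.pi * y) + Real.pi * y := by ring
    rw [e, split_right (b := θ - Real.pi + k * (Real.pi * y)) measurableSet_Ioc (by linarith)
      (by linarith) (H.fint hx hx1 _ _ _ _ _ (by linarith) (by linarith) (by linarith)),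
      split_right (b := θ - Real.pi + k * (Real.pi * y)) measurableSet_Ioc (by linarith)
      (by linarith) (mj_int hx (by linarith)), mul_add]
    exact (norm_add_le _ _).trans (add_le_add (ih hk')
      (H.tile hx hx1 hy hy1 (by linarith) (by linarith)))

lemma PH.annulus (H : PH h A C M) {x θ : ℝ} (hx : 0 < x) (hx1 : x ≤ 1 / 2) (n : ℕ) :
    ‖∫ p in Ioc (1 / 2) (1 - (1 / 2) ^ (n + 1)) ×ˢ Ioc (θ - Real.pi) (θ + Real.pi),
      (h p - p.1 • A x θ) * (Kf (1 - x) θ p.1 p.2 : ℂ)‖ ≤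
    25 * 54 ^ 4 * (170000 * C + 4 * M) *
      ∫ p in Ioc (1 / 2) (1 - (1 / 2) ^ (n + 1)) ×ˢ Ioc (θ - Real.pi) (θ + Real.pi),
        mj x θ p := by
  have hpi := Real.pi_pos
  induction n with
  | zero => norm_num
  | succ n ih =>
    set y : ℝ := (1 / 2) ^ (n + 1) with hy
    have hy0 : 0 < y := by positivity
    have hy1 : y ≤ 1 / 2 := by
      rw [hy, pow_succ]
      have : (1 / 2 : ℝ) ^ n ≤ 1 := pow_le_one₀ (by norm_num) (by norm_num)
      linarith
    have e : (1 / 2 : ℝ) ^ (n + 1 + 1) = y / 2 := by rw [pow_succ, ← hy]; ring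
    have hk : ((2 ^ (n + 2) : ℕ) : ℝ) * y = 2 := by
      rw [hy]; push_cast; rw [div_pow, pow_succ 2 (n + 1)]; field_simp; simp
    have hθ : θ - Real.pi + ((2 ^ (n + 2) : ℕ) : ℝ) * (Real.pi * y) = θ + Real.pi := by
      have : ((2 ^ (n + 2) : ℕ) : ℝ) * (Real.pi * y) = Real.pi * (((2 ^ (n + 2) : ℕ) : ℝ) * y) := by ring
      rw [this, hk]; ring
    have ha := H.annulus_aux (θ := θ) hx hx1 hy0 hy1 (2 ^ (n + 2)) hk.le
    rw [hθ] at ha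
    rw [e, split_left (b := 1 - y) measurableSet_Ioc (by linarith)
      (by linarith) (H.fint hx hx1 _ _ _ _ _ (by linarith) (by linarith) (by linarith)),
      split_left (b := 1 - y) measurableSet_Ioc (by linarith)
      (by linarith) (mj_int hx (by linarith)), mul_add]
    exact (norm_add_le _ _).trans (add_le_add ih ha)

lemma int_p {x θ : ℝ} (hx : 0 < x) :
    ∫ φ in Ioc (θ - Real.pi) (θ + Real.pi), ((x + |φ - θ|) ^ 2)⁻¹ ≤ 2 / x := by
  have hpi := Real.pi_pos
  have hc : Continuous (fun φ : ℝ => ((x + |φ - θ|) ^ 2)⁻¹) := by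
    apply Continuous.inv₀ (by fun_prop)
    intro φ
    have := abs_nonneg (φ - θ)
    have : 0 < x + |φ - θ| := by linarith
    positivity
  rw [← intervalIntegral.integral_of_le (by linarith),
    ← intervalIntegral.integral_add_adjacent_intervals (b := θ) (hc.intervalIntegrable _ _)
      (hc.intervalIntegrable _ _)]
  have i1 : ∫ φ in (θ - Real.pi)..θ, ((x + |φ - θ|) ^ 2)⁻¹ = x⁻¹ - (x + Real.pi)⁻¹ := by
    have := intervalIntegral.integral_eq_sub_of_hasDerivAt (a := θ - Real.pi) (b := θ)
      (f := fun φ => (x - (φ - θ))⁻¹) (f' := fun φ => ((x + |φ - θ|) ^ 2)⁻¹) ?_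
      (hc.intervalIntegrable _ _)
    · rw [this]; simp
    · intro φ hφ
      rw [uIcc_of_le (by linarith)] at hφ
      have hn : 0 < x - (φ - θ) := by linarith [hφ.2]
      rw [abs_of_nonpos (by linarith [hφ.2])]
      have := (((hasDerivAt_id φ).sub_const θ).const_sub x).inv hn.ne'
      refine HasDerivAt.congr_deriv this ?_
      simp [sub_eq_add_neg]
  have i2 : ∫ φ in θ..(θ + Real.pi), ((x + |φ - θ|) ^ 2)⁻¹ = x⁻¹ - (x + Real.pi)⁻¹ := by
    have := intervalIntegral.integral_eq_sub_of_hasDerivAt (a := θ) (b := θ + Real.pi)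
      (f := fun φ => -(x + (φ - θ))⁻¹) (f' := fun φ => ((x + |φ - θ|) ^ 2)⁻¹) ?_
      (hc.intervalIntegrable _ _)
    · rw [this]; simp; ring
    · intro φ hφ
      rw [uIcc_of_le (by linarith)] at hφ
      have hn : 0 < x + (φ - θ) := by linarith [hφ.1]
      rw [abs_of_nonneg (by linarith [hφ.1])]
      have := ((((hasDerivAt_id φ).sub_const θ).const_add x).inv hn.ne').neg
      refine HasDerivAt.congr_deriv this ?_
      simp [neg_div]
  rw [i1, i2]
  have : 0 < (x + Real.pi)⁻¹ := by positivity
  rw [div_eq_mul_inv]; linarith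

lemma int_q {x b : ℝ} (hx : 0 < x) (hb0 : 1 / 2 ≤ b) (hb : b < 1) :
    ∫ ρ in Ioc (1 / 2) b, ((x + (1 - ρ)) * √(x + (1 - ρ)))⁻¹ * ((√x)⁻¹ + (√(1 - ρ))⁻¹) ≤ 4 / x := by
  have hsx : 0 < √x := Real.sqrt_pos.2 hx
  rw [← intervalIntegral.integral_of_le hb0]
  have := intervalIntegral.integral_eq_sub_of_hasDerivAt (a := 1 / 2) (b := b)
      (f := fun ρ => 2 * (√x)⁻¹ * (√(x + (1 - ρ)))⁻¹ - 2 / x * (√(1 - ρ) / √(x + (1 - ρ))))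
      (f' := fun ρ => ((x + (1 - ρ)) * √(x + (1 - ρ)))⁻¹ * ((√x)⁻¹ + (√(1 - ρ))⁻¹)) ?_ ?_
  · rw [this]
    have t1 : 2 * (√x)⁻¹ * (√(x + (1 - b)))⁻¹ ≤ 2 / x := by
      have : (√(x + (1 - b)))⁻¹ ≤ (√x)⁻¹ := by gcongr; linarith
      calc 2 * (√x)⁻¹ * (√(x + (1 - b)))⁻¹ ≤ 2 * (√x)⁻¹ * (√x)⁻¹ := by gcongr
        _ = 2 / x := by rw [mul_assoc, ← mul_inv, Real.mul_self_sqrt hx.le]; rfl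
    have t2 : 0 ≤ 2 / x * (√(1 - b) / √(x + (1 - b))) := by positivity
    have t3 : 0 ≤ 2 * (√x)⁻¹ * (√(x + (1 - 1 / 2)))⁻¹ := by positivity
    have t4 : 2 / x * (√(1 - 1 / 2) / √(x + (1 - 1 / 2))) ≤ 2 / x * 1 := by
      gcongr
      apply div_le_one_of_le₀ _ (by positivity)
      gcongr; linarith
    have : 4 / x = 2 / x + 2 / x := by ring
    linarith
  · intro ρ hρ
    rw [uIcc_of_le hb0] at hρ
    have h1 : 0 < 1 - ρ := by linarith [hρ.2]
    have h2 : 0 < x + (1 - ρ) := by linarith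
    have hr : 0 < √(1 - ρ) := Real.sqrt_pos.2 h1
    have hw : 0 < √(x + (1 - ρ)) := Real.sqrt_pos.2 h2
    have d1 : HasDerivAt (fun ρ : ℝ => √(1 - ρ)) (-1 / (2 * √(1 - ρ))) ρ :=
      ((hasDerivAt_id ρ).const_sub 1).sqrt h1.ne'
    have d2 : HasDerivAt (fun ρ : ℝ => √(x + (1 - ρ))) (-1 / (2 * √(x + (1 - ρ)))) ρ :=
      (((hasDerivAt_id ρ).const_sub 1).const_add x).sqrt h2.ne'
    have d := ((d2.inv hw.ne').const_mul (2 * (√x)⁻¹)).sub ((d1.div d2 hw.ne').const_mul (2 / x))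
    refine HasDerivAt.congr_deriv d ?_
    have s1 : √(1 - ρ) ^ 2 = 1 - ρ := Real.sq_sqrt h1.le
    have s2 : √(x + (1 - ρ)) ^ 2 = x + (1 - ρ) := Real.sq_sqrt h2.le
    have hxe : x = √(x + (1 - ρ)) ^ 2 - √(1 - ρ) ^ 2 := by rw [s1, s2]; ring
    have e : (x + (1 - ρ)) * √(x + (1 - ρ)) = √(x + (1 - ρ)) ^ 3 := by
      rw [pow_succ, s2]
    rw [e]
    generalize √(1 - ρ) = r at *
    generalize √(x + (1 - ρ)) = w at *
    generalize √x = X at *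
    have : w ^ 2 - r ^ 2 ≠ 0 := by rw [← hxe]; exact hx.ne'
    rw [hxe]
    field_simp
    ring
  · apply ContinuousOn.intervalIntegrable
    rw [uIcc_of_le hb0]
    apply ContinuousOn.mul
    · apply ContinuousOn.inv₀ (by fun_prop)
      intro ρ hρ
      have : 0 < x + (1 - ρ) := by linarith [hρ.2]
      positivity
    · apply continuousOn_const.add
      apply ContinuousOn.inv₀ (by fun_prop)
      intro ρ hρ
      have : 0 < 1 - ρ := by linarith [hρ.2]
      positivity

lemma mj_total {x θ b : ℝ} (hx : 0 < x) (hb0 : 1 / 2 ≤ b) (hb : b < 1) :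
    ∫ p in Ioc (1 / 2) b ×ˢ Ioc (θ - Real.pi) (θ + Real.pi), mj x θ p ≤ 8 / x ^ 2 := by
  have e : ∫ p in Ioc (1 / 2) b ×ˢ Ioc (θ - Real.pi) (θ + Real.pi), mj x θ p =
      (∫ ρ in Ioc (1 / 2) b, ((x + (1 - ρ)) * √(x + (1 - ρ)))⁻¹ * ((√x)⁻¹ + (√(1 - ρ))⁻¹)) *
      ∫ φ in Ioc (θ - Real.pi) (θ + Real.pi), ((x + |φ - θ|) ^ 2)⁻¹ := by
    rw [Measure.volume_eq_prod, ← setIntegral_prod_mul]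
    congr 1; ext p
    rw [mj, mul_comm]
  rw [e]
  have n : 0 ≤ ∫ φ in Ioc (θ - Real.pi) (θ + Real.pi), ((x + |φ - θ|) ^ 2)⁻¹ :=
    integral_nonneg (fun φ => by positivity)
  calc _ ≤ 4 / x * (2 / x) := by
        apply mul_le_mul (int_q hx hb0 hb) (int_p hx) n (by positivity)
    _ = 8 / x ^ 2 := by field_simp; norm_num

end

section
open MeasureTheory Set Filter Topology

lemma rK_int {s θ : ℝ} (hs : 0 ≤ s) (hs1 : s < 1) {a b c d : ℝ} (ha : 0 ≤ a) (hb : b ≤ 1) :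
    IntegrableOn (fun p : ℝ × ℝ => p.1 * Kf s θ p.1 p.2) (Ioc a b ×ˢ Ioc c d) := by
  have hc := (Kf_cont (s := s) (θ := θ) (S := Icc a b ×ˢ Icc c d)
    (fun p hp => (Nf_pos hs hs1 (ha.trans hp.1.1) (hp.1.2.trans hb)).ne')).1
  have : IntegrableOn (fun p : ℝ × ℝ => p.1 * Kf s θ p.1 p.2) (Icc a b ×ˢ Icc c d) :=
    (continuousOn_fst.mul hc).integrableOn_compact (isCompact_Icc.prod isCompact_Icc)
  exact this.mono_set (Set.prod_mono Ioc_subset_Icc_self Ioc_subset_Icc_self)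

lemma mass_up {x θ b : ℝ} (hx : 0 < x) (hx1 : x ≤ 1 / 2) (hb0 : 1 / 2 ≤ b) (hb : b < 1) :
    ∫ p in Ioc (1 / 2) b ×ˢ Ioc (θ - Real.pi) (θ + Real.pi), p.1 * Kf (1 - x) θ p.1 p.2
      ≤ 1296 * (8 / x ^ 2) := by
  have h := mj_total (θ := θ) hx hb0 hb
  refine le_trans ?_ (mul_le_mul_of_nonneg_left h (by norm_num))
  rw [← integral_const_mul]
  apply setIntegral_mono_on (rK_int (by linarith) (by linarith) (by norm_num) hb.le)
    ((mj_int hx hb).const_mul _) (measurableSet_Ioc.prod measurableSet_Ioc)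
  rintro ⟨ρ, φ⟩ ⟨⟨a1, a2⟩, a3, a4⟩
  simp only at a1 a2 a3 a4 ⊢
  have hψ : |φ - θ| ≤ Real.pi := by rw [abs_le]; constructor <;> linarith
  have n := abs_nonneg (φ - θ)
  set L := x + |φ - θ| + (1 - ρ) with hL
  have hL0 : 0 < L := by linarith
  have k := kernel_bounds (s := 1 - x) (θ := θ) (ρ := ρ) (φ := φ) (by linarith) (by linarith)
    (by linarith) (by linarith) (by positivity : 0 < L / 6)
    (Nf_low hx hx1 a1.le (by linarith) hψ)
  have h1 : ρ * Kf (1 - x) θ ρ φ ≤ 1 * ((L / 6) ^ 4)⁻¹ := by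
    apply mul_le_mul (by linarith) k.2.1 k.1 (by norm_num)
  refine h1.trans ?_
  have h2 : ((L ^ 2)⁻¹ * ((L * √L)⁻¹ * (√L)⁻¹)) ≤ mj x θ (ρ, φ) := by
    rw [mj]
    have q1 : 0 < 1 - ρ := by linarith
    have q2 : 0 < x + (1 - ρ) := by linarith
    have q3 : 0 < x + |φ - θ| := by linarith
    have q4 : 0 ≤ (√(1 - ρ))⁻¹ := by positivity
    have q5 : (√L)⁻¹ ≤ (√x)⁻¹ := by gcongr; linarith
    simp only
    gcongr
    · linarith
    · linarith
    · linarith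
    · linarith
  have h3 : ((L ^ 2)⁻¹ * ((L * √L)⁻¹ * (√L)⁻¹)) = (L ^ 4)⁻¹ := by
    rw [← mul_inv, ← mul_inv, mul_assoc, Real.mul_self_sqrt hL0.le]; ring_nf
  rw [h3] at h2
  have h4 : 1 * ((L / 6) ^ 4)⁻¹ = 1296 * (L ^ 4)⁻¹ := by
    rw [div_pow, inv_div]; ring
  rw [h4]; gcongr

lemma mass_low {x θ b : ℝ} (hx : 0 < x) (hx1 : x ≤ 1 / 2) (hb0 : 1 - x / 2 ≤ b) (hb : b < 1) :
    1 / (324 * x ^ 2) ≤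
    ∫ p in Ioc (1 / 2) b ×ˢ Ioc (θ - Real.pi) (θ + Real.pi), p.1 * Kf (1 - x) θ p.1 p.2 := by
  have hpi := Real.pi_gt_three
  have hK0 : ∀ ρ φ, 0 ≤ Kf (1 - x) θ ρ φ := fun ρ φ => by unfold Kf; positivity
  have m : ∫ p in Ioc (1 - x) (1 - x / 2) ×ˢ Ioc θ (θ + x), p.1 * Kf (1 - x) θ p.1 p.2 ≤
      ∫ p in Ioc (1 / 2) b ×ˢ Ioc (θ - Real.pi) (θ + Real.pi), p.1 * Kf (1 - x) θ p.1 p.2 := by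
    apply setIntegral_mono_set (rK_int (by linarith) (by linarith) (by norm_num) hb.le)
    · filter_upwards [ae_restrict_mem (measurableSet_Ioc.prod measurableSet_Ioc)] with p hp
      have : 0 ≤ p.1 := by linarith [hp.1.1]
      exact mul_nonneg this (hK0 _ _)
    · apply LE.le.eventuallyLE
      apply Set.prod_mono
      · exact Ioc_subset_Ioc (by linarith) hb0
      · exact Ioc_subset_Ioc (by linarith) (by linarith)
  refine le_trans ?_ m
  have c := rect_const (1 - x) (1 - x / 2) θ (θ + x) (1 / 2 * ((81 * x ^ 4)⁻¹)) (by linarith)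
    (by linarith)
  have c' : 1 / (324 * x ^ 2) = 1 / 2 * ((81 * x ^ 4)⁻¹) * ((1 - x / 2 - (1 - x)) * (θ + x - θ)) := by
    field_simp; ring
  rw [c', ← c]
  apply setIntegral_mono_on (integrableOn_const (rect_finite _ _ _ _))
    (rK_int (by linarith) (by linarith) (by linarith) (by linarith))
    (measurableSet_Ioc.prod measurableSet_Ioc)
  rintro ⟨ρ, φ⟩ ⟨⟨a1, a2⟩, a3, a4⟩
  simp only at a1 a2 a3 a4 ⊢
  have hN := Nf_up (ψ := φ - θ) hx hx1 (by linarith : 1 / 2 ≤ ρ) (by linarith)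
  have hN0 : 0 < Nf (1 - x) ρ (φ - θ) := Nf_pos (by linarith) (by linarith) (by linarith) (by linarith)
  have hN9 : Nf (1 - x) ρ (φ - θ) ≤ (3 * x) ^ 2 := by
    refine hN.trans ?_
    rw [abs_of_pos (by linarith)]
    apply pow_le_pow_left₀ (by linarith); linarith
  have : (81 * x ^ 4)⁻¹ ≤ Kf (1 - x) θ ρ φ := by
    unfold Kf
    apply inv_anti₀ (by positivity)
    calc _ ≤ ((3 * x) ^ 2) ^ 2 := by gcongr
      _ = _ := by ring
  apply mul_le_mul (by linarith) this (by positivity) (by linarith)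

variable {h : ℝ × ℝ → ℂ} {A : ℝ → ℝ → ℂ} {C M : ℝ}

lemma PH.core (H : PH h A C M) {x θ : ℝ} (hx : 0 < x) (hx1 : x ≤ 1 / 2) :
    ‖∫ p in Ioo (1 / 2) 1 ×ˢ Ioc (θ - Real.pi) (θ + Real.pi), h p * (Kf (1 - x) θ p.1 p.2 : ℂ)‖ ≤
      25 * 54 ^ 4 * (170000 * C + 4 * M) * (8 / x ^ 2) + ‖A x θ‖ * (1296 * (8 / x ^ 2)) ∧
    ‖A x θ‖ * (1 / (324 * x ^ 2)) ≤
      ‖∫ p in Ioo (1 / 2) 1 ×ˢ Ioc (θ - Real.pi) (θ + Real.pi), h p * (Kf (1 - x) θ p.1 p.2 : ℂ)‖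
      + 25 * 54 ^ 4 * (170000 * C + 4 * M) * (8 / x ^ 2) := by
  have hpi := Real.pi_pos
  have hC := H.hC
  have hM := H.hM
  set D := 25 * 54 ^ 4 * (170000 * C + 4 * M) with hD
  have hD0 : 0 ≤ D := by positivity
  set P := Ioc (θ - Real.pi) (θ + Real.pi) with hP
  set S : ℕ → Set (ℝ × ℝ) := fun n => Ioc (1 / 2) (1 - (1 / 2) ^ (n + 1)) ×ˢ P with hS
  have hlt : ∀ n : ℕ, (0:ℝ) < (1 / 2) ^ (n + 1) := fun n => by positivity
  have hUn : ⋃ n, S n = Ioo (1 / 2) 1 ×ˢ P := by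
    ext p
    simp only [mem_iUnion, hS, mem_prod, mem_Ioc, mem_Ioo]
    constructor
    · rintro ⟨n, ⟨h1, h2⟩, h3⟩
      exact ⟨⟨h1, by linarith [hlt n]⟩, h3⟩
    · rintro ⟨⟨h1, h2⟩, h3⟩
      obtain ⟨n, hn⟩ := exists_pow_lt_of_lt_one (by linarith : 0 < 1 - p.1) (by norm_num : (1 / 2 : ℝ) < 1)
      refine ⟨n, ⟨h1, ?_⟩, h3⟩
      have : (1 / 2 : ℝ) ^ (n + 1) ≤ (1 / 2) ^ n :=
        pow_le_pow_of_le_one (by norm_num) (by norm_num) (by omega)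
      linarith
  have hmono : Monotone S := by
    intro m n hmn
    apply Set.prod_mono _ le_rfl
    apply Ioc_subset_Ioc_right
    have : (1 / 2 : ℝ) ^ (n + 1) ≤ (1 / 2) ^ (m + 1) :=
      pow_le_pow_of_le_one (by norm_num) (by norm_num) (by omega)
    linarith
  have hSm : ∀ n, MeasurableSet (S n) := fun n => measurableSet_Ioc.prod measurableSet_Ioc
  have hI : IntegrableOn (fun p => h p * (Kf (1 - x) θ p.1 p.2 : ℂ)) (Ioo (1 / 2) 1 ×ˢ P) := by
    apply K_int (by linarith) (by linarith) (measurableSet_Ioo.prod measurableSet_Ioc)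
    · intro p hp; exact ⟨by linarith [hp.1.1], hp.1.2.le⟩
    · have := H.hI (θ - Real.pi)
      rw [show θ - Real.pi + 2 * Real.pi = θ + Real.pi by ring] at this
      exact this.mono_set (Set.prod_mono (Ioo_subset_Ioo_left (by norm_num)) le_rfl)
  have hlim := tendsto_setIntegral_of_monotone (μ := volume) hSm hmono (by rw [hUn]; exact hI)
  rw [hUn] at hlim
  have hlim' := hlim.norm
  have hev : ∀ᶠ n : ℕ in atTop, 1 - x / 2 ≤ 1 - (1 / 2 : ℝ) ^ (n + 1) := by
    have := (tendsto_pow_atTop_nhds_zero_of_lt_one (by norm_num : (0:ℝ) ≤ 1 / 2) (by norm_num)).comp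
      (tendsto_add_atTop_nat 1)
    filter_upwards [this.eventually_le_const (by positivity : 0 < x / 2)] with n hn
    simp only [Function.comp] at hn
    linarith
  have hest : ∀ n : ℕ, ‖(∫ p in S n, h p * (Kf (1 - x) θ p.1 p.2 : ℂ)) -
      A x θ * ((∫ p in S n, p.1 * Kf (1 - x) θ p.1 p.2 : ℝ) : ℂ)‖ ≤ D * (8 / x ^ 2) := by
    intro n
    have hn1 : 1 / 2 ≤ 1 - (1 / 2 : ℝ) ^ (n + 1) := by
      have : (1 / 2 : ℝ) ^ n ≤ 1 := pow_le_one₀ (by norm_num) (by norm_num)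
      rw [pow_succ]; linarith
    have hn2 : 1 - (1 / 2 : ℝ) ^ (n + 1) < 1 := by linarith [hlt n]
    have a := H.annulus (θ := θ) hx hx1 n
    have m := mj_total (θ := θ) hx hn1 hn2
    refine le_trans (le_of_eq ?_) (a.trans (mul_le_mul_of_nonneg_left m hD0))
    congr 1
    rw [← integral_complex_ofReal, ← integral_const_mul, ← integral_sub]
    · congr 1; ext p; simp only [Complex.real_smul]; push_cast; ring
    · rw [← hUn] at hI; exact hI.mono_set (subset_iUnion S n)
    · exact (rK_int (by linarith) (by linarith) (by norm_num) hn2.le).ofReal.const_mul _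
  constructor
  · apply le_of_tendsto hlim'
    filter_upwards [hev] with n hn
    have hn2 : 1 - (1 / 2 : ℝ) ^ (n + 1) < 1 := by linarith [hlt n]
    have u := mass_up (θ := θ) hx hx1 (by linarith : 1 / 2 ≤ 1 - (1 / 2 : ℝ) ^ (n + 1)) hn2
    have l := mass_low (θ := θ) hx hx1 hn hn2
    have l0 : 0 ≤ ∫ p in S n, p.1 * Kf (1 - x) θ p.1 p.2 := le_trans (by positivity) l
    have e := norm_le_norm_sub_add (∫ p in S n, h p * (Kf (1 - x) θ p.1 p.2 : ℂ))
      (A x θ * ((∫ p in S n, p.1 * Kf (1 - x) θ p.1 p.2 : ℝ) : ℂ))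
    refine e.trans (add_le_add (hest n) ?_)
    rw [norm_mul, Complex.norm_real, Real.norm_eq_abs, abs_of_nonneg l0]
    gcongr
  · apply ge_of_tendsto (hlim'.add_const _)
    filter_upwards [hev] with n hn
    have hn2 : 1 - (1 / 2 : ℝ) ^ (n + 1) < 1 := by linarith [hlt n]
    have l := mass_low (θ := θ) hx hx1 hn hn2
    have l0 : 0 ≤ ∫ p in S n, p.1 * Kf (1 - x) θ p.1 p.2 := le_trans (by positivity) l
    have e := norm_le_norm_sub_add
      (A x θ * ((∫ p in S n, p.1 * Kf (1 - x) θ p.1 p.2 : ℝ) : ℂ))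
      (∫ p in S n, h p * (Kf (1 - x) θ p.1 p.2 : ℂ))
    rw [norm_sub_rev, norm_mul, Complex.norm_real, Real.norm_eq_abs, abs_of_nonneg l0] at e
    have := hest n
    have : ‖A x θ‖ * (1 / (324 * x ^ 2)) ≤ ‖A x θ‖ * ∫ p in S n, p.1 * Kf (1 - x) θ p.1 p.2 := by
      gcongr
    linarith

end

open MeasureTheory Set

lemma hp_norm (f : ℂ → ℂ) (c : ℝ) :
    ∫ p in Ioo 0 1 ×ˢ Ioc c (c + 2 * Real.pi), ‖hp f p‖ = Real.pi * ∫ w in unitDisc, ‖f w‖ ∂dA := by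
  have h := disc_int c (fun w => ((‖f w‖ : ℝ) : ℂ))
  have e : ∫ p in Ioo 0 1 ×ˢ Ioc c (c + 2 * Real.pi), p.1 • ((‖f (cp p)‖ : ℝ) : ℂ) =
      ((∫ p in Ioo 0 1 ×ˢ Ioc c (c + 2 * Real.pi), ‖hp f p‖ : ℝ) : ℂ) := by
    rw [← integral_complex_ofReal]
    apply setIntegral_congr_fun (measurableSet_Ioo.prod measurableSet_Ioc)
    intro p hp'
    have t : ‖hp f p‖ = p.1 * ‖f (cp p)‖ := by
      rw [hp, norm_smul, Real.norm_eq_abs, abs_of_pos hp'.1.1]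
    show p.1 • ((‖f (cp p)‖ : ℝ) : ℂ) = ((‖hp f p‖ : ℝ) : ℂ)
    rw [t, Complex.real_smul, Complex.ofReal_mul]
  rw [e, integral_complex_ofReal, Complex.real_smul, ← Complex.ofReal_mul] at h
  have h' := Complex.ofReal_injective h
  rw [h', ← mul_assoc, mul_inv_cancel₀ Real.pi_ne_zero, one_mul]

lemma region_bound (f : ℂ → ℂ) (hf : IntegrableOn f unitDisc dA) {s θ : ℝ} (hs : 0 ≤ s)
    (hs1 : s < 1) {S : Set (ℝ × ℝ)} (hSm : MeasurableSet S)
    (hS : S ⊆ Ioo 0 1 ×ˢ Ioc (θ - Real.pi) (θ + Real.pi)) (h2 : ∀ p ∈ S, p.1 * s ≤ 1 / 2) :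
    ‖∫ p in S, hp f p * (Kf s θ p.1 p.2 : ℂ)‖ ≤
      16 * (Real.pi * ∫ w in unitDisc, ‖f w‖ ∂dA) := by
  have hI := disc_integrable (θ - Real.pi) f hf
  have hN := hp_norm f (θ - Real.pi)
  rw [show θ - Real.pi + 2 * Real.pi = θ + Real.pi by ring] at hI hN
  rw [← hN, ← integral_const_mul]
  have hI' : IntegrableOn (fun p => 16 * ‖hp f p‖) (Ioo 0 1 ×ˢ Ioc (θ - Real.pi) (θ + Real.pi)) :=
    hI.norm.const_mul 16
  have m : ∫ p in S, 16 * ‖hp f p‖ ≤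
      ∫ p in Ioo 0 1 ×ˢ Ioc (θ - Real.pi) (θ + Real.pi), 16 * ‖hp f p‖ := by
    apply setIntegral_mono_set hI'
    · exact Filter.Eventually.of_forall (fun p => by positivity)
    · exact LE.le.eventuallyLE hS
  refine le_trans ?_ m
  apply norm_integral_le_of_norm_le (hI'.mono_set hS)
  filter_upwards [ae_restrict_mem hSm] with p hp'
  have a := (hS hp').1
  have b := h2 p hp'
  have c := Real.cos_le_one (p.2 - θ)
  have d : 0 ≤ p.1 * s := mul_nonneg a.1.le hs
  have hl : (1 / 2 : ℝ) ^ 2 ≤ Nf s p.1 (p.2 - θ) := by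
    unfold Nf
    nlinarith [mul_nonneg d (by linarith : 0 ≤ 1 - Real.cos (p.2 - θ))]
  have k := kernel_bounds hs hs1 a.1.le a.2.le (by norm_num) hl
  rw [norm_mul, Complex.norm_real, Real.norm_eq_abs, abs_of_nonneg k.1, mul_comm]
  have := k.2.1
  norm_num at this
  gcongr

lemma berezin_K (f : ℂ → ℂ) (s θ : ℝ) (hs : 0 ≤ s) :
    berezin f (cp (s, θ)) = (((Real.pi)⁻¹ * (1 - s ^ 2) ^ 2 : ℝ) : ℂ) *
      ∫ p in Ioo 0 1 ×ˢ Ioc (θ - Real.pi) (θ + Real.pi), hp f p * (Kf s θ p.1 p.2 : ℂ) := by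
  have e : ∫ p in Ioo 0 1 ×ˢ Ioc (θ - Real.pi) (θ + Real.pi),
        hp f p * ((1 - s ^ 2) ^ 2 * (Nf s p.1 (p.2 - θ) ^ 2)⁻¹ : ℝ) =
      (((1 - s ^ 2) ^ 2 : ℝ) : ℂ) *
      ∫ p in Ioo 0 1 ×ˢ Ioc (θ - Real.pi) (θ + Real.pi), hp f p * (Kf s θ p.1 p.2 : ℂ) := by
    rw [← integral_const_mul]
    refine integral_congr_ae (Filter.Eventually.of_forall fun p => ?_)
    simp only [Kf]
    push_cast; ring
  rw [berezin_polar f s θ hs, e, Complex.real_smul, Complex.ofReal_mul, mul_assoc]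

lemma mkPH (f : ℂ → ℂ) (hf : IntegrableOn f unitDisc dA) (hb : IsBWMO f) :
    ∃ C M, PH (hp f) (Ap f) C M := by
  obtain ⟨C, hC, hB⟩ := bwmo_polar f hb
  obtain ⟨M, hM, hA⟩ := avg_center f hf
  refine ⟨C, M, hC, hM, fun c => disc_integrable c f hf, hB, fun θ => ?_⟩
  apply hA
  rw [norm_cp _ (by norm_num)]; norm_num

lemma berezin_center (f : ℂ → ℂ) (hf : IntegrableOn f unitDisc dA) (z : ℂ) (hz : ‖z‖ ≤ 1 / 2) :
    ‖berezin f z‖ ≤ 16 * (Real.pi * ∫ w in unitDisc, ‖f w‖ ∂dA) := by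
  have n := norm_nonneg z
  have hpi := Real.pi_gt_three
  rw [← cp_theta z, berezin_K f _ _ n, norm_mul, Complex.norm_real, Real.norm_eq_abs]
  have r := region_bound f hf (s := ‖z‖) (θ := theta z) n (by linarith)
    (measurableSet_Ioo.prod measurableSet_Ioc) le_rfl
    (fun p hp' => by nlinarith [hp'.1.1, hp'.1.2])
  have c : |(Real.pi)⁻¹ * (1 - ‖z‖ ^ 2) ^ 2| ≤ 1 := by
    rw [abs_of_nonneg (by positivity)]
    apply mul_le_one₀ (inv_le_one_of_one_le₀ (by linarith)) (by positivity)
    apply pow_le_one₀ <;> nlinarith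
  calc _ ≤ 1 * (16 * (Real.pi * ∫ w in unitDisc, ‖f w‖ ∂dA)) := by gcongr
    _ = _ := one_mul _

lemma main_est (f : ℂ → ℂ) (hf : IntegrableOn f unitDisc dA) (hb : IsBWMO f) :
    ∃ D B : ℝ, 0 ≤ D ∧ 0 ≤ B ∧ ∀ z, 1 / 2 ≤ ‖z‖ → ‖z‖ < 1 →
      ‖berezin f z‖ ≤ 64 * B + 32 * D + 41472 * ‖avg f z‖ ∧
      ‖avg f z‖ ≤ 324 * (Real.pi * ‖berezin f z‖ + 16 * B + 8 * D) := by
  obtain ⟨C, M, H⟩ := mkPH f hf hb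
  have hC := H.hC
  have hM := H.hM
  have hpi := Real.pi_gt_three
  refine ⟨25 * 54 ^ 4 * (170000 * C + 4 * M), Real.pi * ∫ w in unitDisc, ‖f w‖ ∂dA, by positivity,
    mul_nonneg Real.pi_pos.le (integral_nonneg (fun _ => norm_nonneg _)), ?_⟩
  have hB0 : 0 ≤ Real.pi * ∫ w in unitDisc, ‖f w‖ ∂dA :=
    mul_nonneg Real.pi_pos.le (integral_nonneg (fun _ => norm_nonneg _))
  intro z hz hz1
  set x := 1 - ‖z‖ with hxz
  set θ := theta z with hθ
  have hx : 0 < x := by linarith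
  have hx1 : x ≤ 1 / 2 := by linarith
  have hs : ‖z‖ = 1 - x := by linarith
  have hzc : cp (1 - x, θ) = z := by rw [← hs]; exact cp_theta z
  have hAp : Ap f x θ = avg f z := by rw [Ap, hzc]
  have c := H.core (θ := θ) hx hx1
  have b := berezin_K f (1 - x) θ (by linarith)
  rw [hzc] at b
  rw [hAp] at c
  have r := region_bound f hf (s := 1 - x) (θ := θ) (S := Ioc 0 (1 / 2) ×ˢ Ioc (θ - Real.pi) (θ + Real.pi))
    (by linarith) (by linarith) (measurableSet_Ioc.prod measurableSet_Ioc)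
    (prod_mono (fun t ht => ⟨ht.1, by linarith [ht.2]⟩) le_rfl)
    (fun p hp' => by nlinarith [hp'.1.1, hp'.1.2])
  have hI : IntegrableOn (fun p => hp f p * (Kf (1 - x) θ p.1 p.2 : ℂ))
      (Ioo 0 1 ×ˢ Ioc (θ - Real.pi) (θ + Real.pi)) := by
    apply K_int (by linarith) (by linarith) (measurableSet_Ioo.prod measurableSet_Ioc)
    · intro p hp'; exact ⟨hp'.1.1.le, hp'.1.2.le⟩
    · have := H.hI (θ - Real.pi)
      rwa [show θ - Real.pi + 2 * Real.pi = θ + Real.pi by ring] at this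
  have hspl : ∫ p in Ioo 0 1 ×ˢ Ioc (θ - Real.pi) (θ + Real.pi), hp f p * (Kf (1 - x) θ p.1 p.2 : ℂ) =
      (∫ p in Ioc 0 (1 / 2) ×ˢ Ioc (θ - Real.pi) (θ + Real.pi), hp f p * (Kf (1 - x) θ p.1 p.2 : ℂ)) +
      ∫ p in Ioo (1 / 2) 1 ×ˢ Ioc (θ - Real.pi) (θ + Real.pi), hp f p * (Kf (1 - x) θ p.1 p.2 : ℂ) := by
    have hu : (Ioo 0 1 : Set ℝ) = Ioc 0 (1 / 2) ∪ Ioo (1 / 2) 1 :=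
      (Ioc_union_Ioo_eq_Ioo (by norm_num) (by norm_num)).symm
    rw [hu, union_prod] at hI ⊢
    rw [setIntegral_union _ (measurableSet_Ioo.prod measurableSet_Ioc) hI.left_of_union
      hI.right_of_union]
    rw [Set.disjoint_prod]
    left
    rw [Set.disjoint_left]
    intro t ht ht'
    exact absurd ht.2 (not_le.2 ht'.1)
  rw [hspl] at b
  generalize (∫ p in Ioc 0 (1 / 2) ×ˢ Ioc (θ - Real.pi) (θ + Real.pi),
    hp f p * (Kf (1 - x) θ p.1 p.2 : ℂ)) = J0 at *
  generalize (∫ p in Ioo (1 / 2) 1 ×ˢ Ioc (θ - Real.pi) (θ + Real.pi),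
    hp f p * (Kf (1 - x) θ p.1 p.2 : ℂ)) = J1 at *
  have hD0 : 0 ≤ 25 * 54 ^ 4 * (170000 * C + 4 * M) := by positivity
  generalize 25 * 54 ^ 4 * (170000 * C + 4 * M) = D at *
  generalize Real.pi * ∫ w in unitDisc, ‖f w‖ ∂dA = B at *
  have bn : ‖berezin f z‖ = (Real.pi)⁻¹ * (1 - (1 - x) ^ 2) ^ 2 * ‖J0 + J1‖ := by
    rw [b, norm_mul, Complex.norm_real, Real.norm_eq_abs, abs_of_nonneg (by positivity)]
  generalize ‖berezin f z‖ = β at *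
  have na : 0 ≤ ‖avg f z‖ := norm_nonneg _
  generalize ‖avg f z‖ = a at *
  have k1 : x ^ 2 ≤ (1 - (1 - x) ^ 2) ^ 2 := by
    apply pow_le_pow_left₀ hx.le; nlinarith
  have k2 : (1 - (1 - x) ^ 2) ^ 2 ≤ (2 * x) ^ 2 := by
    apply pow_le_pow_left₀ <;> nlinarith
  have nJ : 0 ≤ ‖J0 + J1‖ := norm_nonneg _
  have hx2 : x ^ 2 ≤ 1 := pow_le_one₀ hx.le (by linarith)
  have hx2p : 0 < x ^ 2 := by positivity
  obtain ⟨c1, c2⟩ := c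
  constructor
  · have t := norm_add_le J0 J1
    have : β ≤ 1 * (2 * x) ^ 2 * (16 * B + (D * (8 / x ^ 2) + a * (1296 * (8 / x ^ 2)))) := by
      rw [bn]
      gcongr
      · exact inv_le_one_of_one_le₀ (by linarith)
      · linarith
    have e : 1 * (2 * x) ^ 2 * (16 * B + (D * (8 / x ^ 2) + a * (1296 * (8 / x ^ 2)))) =
        64 * (x ^ 2 * B) + 32 * D + 41472 * a := by
      field_simp; ring
    rw [e] at this
    nlinarith
  · have t : ‖J1‖ ≤ ‖J0 + J1‖ + ‖J0‖ := by
      have := norm_sub_le (J0 + J1) J0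
      rwa [add_sub_cancel_left] at this
    have l1 : x ^ 2 * ‖J0 + J1‖ ≤ Real.pi * β := by
      have : Real.pi * β = (1 - (1 - x) ^ 2) ^ 2 * ‖J0 + J1‖ := by
        rw [bn, ← mul_assoc, ← mul_assoc, mul_inv_cancel₀ Real.pi_ne_zero, one_mul]
      rw [this]; gcongr
    have l2 : a * (1 / (324 * x ^ 2)) ≤ ‖J0 + J1‖ + 16 * B + D * (8 / x ^ 2) := by linarith
    have l3 := mul_le_mul_of_nonneg_left l2 (by positivity : 0 ≤ 324 * x ^ 2)
    have e1 : 324 * x ^ 2 * (a * (1 / (324 * x ^ 2))) = a := by field_simp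
    have e2 : 324 * x ^ 2 * (‖J0 + J1‖ + 16 * B + D * (8 / x ^ 2)) =
      324 * (x ^ 2 * ‖J0 + J1‖ + 16 * (x ^ 2 * B) + 8 * D) := by field_simp
    rw [e1, e2] at l3
    nlinarith

/-- For `f ∈ L¹(𝔻, dA)` satisfying the BWMO condition, the average
function `f̂` is bounded on `𝔻` if and only if the Berezin transform `f̃` is bounded on `𝔻`. -/
theorem avg_bounded_iff_berezin_bounded (f : ℂ → ℂ)
    (hf : MeasureTheory.IntegrableOn f unitDisc dA) (hbwmo : IsBWMO f) :
    (∃ M : ℝ, ∀ z ∈ unitDisc, ‖avg f z‖ ≤ M) ↔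
      (∃ M : ℝ, ∀ z ∈ unitDisc, ‖berezin f z‖ ≤ M) := by
  obtain ⟨D, B, hD, hB, hm⟩ := main_est f hf hbwmo
  constructor
  · rintro ⟨M, hM⟩
    refine ⟨max (16 * (Real.pi * ∫ w in unitDisc, ‖f w‖ ∂dA)) (64 * B + 32 * D + 41472 * M), ?_⟩
    intro z hz
    rcases le_total ‖z‖ (1 / 2) with h | h
    · exact (berezin_center f hf z h).trans (le_max_left _ _)
    · have := (hm z h hz).1
      have := hM z hz
      exact le_trans (by linarith) (le_max_right _ _)
  · rintro ⟨M, hM⟩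
    obtain ⟨M', _, hM'⟩ := avg_center f hf
    refine ⟨max M' (324 * (Real.pi * M + 16 * B + 8 * D)), ?_⟩
    intro z hz
    rcases le_total ‖z‖ (1 / 2) with h | h
    · exact (hM' z h).trans (le_max_left _ _)
    · have h1 := (hm z h hz).2
      have h2 := mul_le_mul_of_nonneg_left (hM z hz) Real.pi_pos.le
      exact le_trans (by linarith) (le_max_right _ _)
end

section
/- Let b ≥ β > 0 and let f : 𝔻 → ℝ be defined by f(r·e^{iθ}) = (1/(r(1−r)^{b−β}))·sin(1/(1−r)^b) for 1/2 ≤ r < 1 and f(r·e^{iθ}) = 1 for 0 ≤ r < 1/2. Then there exist r₀ ∈ (0,1) and a constant C > 0 such that for every z = r·e^{iθ} ∈ 𝔻 with r ≥ r₀, one has |∫_{D(z,1)} f dA| ≤ C·(1−r)^{2+β}; in particular the hyperbolic average f̂₁(z) = (1/|D(z,1)|)∫_{D(z,1)} f dA satisfies |f̂₁(z)| ≤ C'·(1−r)^β for some constant C' > 0, so f̂₁(z) → 0 as |z| → 1. -/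
open MeasureTheory Set

lemma osc_bound_Ioo (b β L c d : ℝ) (hβ : 0 < β) (hbβ : β ≤ b)
    (hc : 1 - L ≤ c) (hcd : c ≤ d) (hd : d < 1) :
    |∫ x in c..d, (1 - x) ^ (β - b) * Real.sin (1 / (1 - x) ^ b)| ≤
      ((3 + β) / b) * L ^ (1 + β) := by
  have hb : 0 < b := by linarith
  have hL : 0 < L := by linarith
  have hpos : ∀ x ∈ Set.uIcc c d, 0 < 1 - x := by
    intro x hx
    rw [Set.uIcc_of_le hcd] at hx
    linarith [hx.2]
  have hleL : ∀ x ∈ Set.uIcc c d, 1 - x ≤ L := by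
    intro x hx
    rw [Set.uIcc_of_le hcd] at hx
    linarith [hx.1]
  set u : ℝ → ℝ := fun x => -(1 / b) * (1 - x) ^ (1 + β) with hu
  set u' : ℝ → ℝ := fun x => (1 + β) / b * (1 - x) ^ β with hu'
  set v : ℝ → ℝ := fun x => Real.cos ((1 - x) ^ (-b)) with hv
  set v' : ℝ → ℝ := fun x => -Real.sin ((1 - x) ^ (-b)) * (b * (1 - x) ^ (-b - 1)) with hv'
  have hdu : ∀ x ∈ Set.uIcc c d, HasDerivAt u (u' x) x := by
    intro x hx
    have h0 : HasDerivAt (fun x : ℝ => 1 - x) (-1) x := by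
      simpa using (hasDerivAt_id x).const_sub 1
    have h1 := (h0.rpow_const (p := 1 + β) (Or.inl (hpos x hx).ne')).const_mul (-(1 / b))
    refine h1.congr_deriv ?_
    change _ = (1 + β) / b * (1 - x) ^ β
    rw [show 1 + β - 1 = β by ring]
    ring
  have hdv : ∀ x ∈ Set.uIcc c d, HasDerivAt v (v' x) x := by
    intro x hx
    have h0 : HasDerivAt (fun x : ℝ => 1 - x) (-1) x := by
      simpa using (hasDerivAt_id x).const_sub 1
    have h1 := (h0.rpow_const (p := -b) (Or.inl (hpos x hx).ne')).cos
    convert h1 using 1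
    simp only [hv']
    ring
  have hcont : ∀ p : ℝ, ContinuousOn (fun x : ℝ => (1 - x) ^ p) (Set.uIcc c d) := by
    intro p
    apply ContinuousOn.rpow_const (by fun_prop)
    intro x hx
    exact Or.inl (hpos x hx).ne'
  have hiu : IntervalIntegrable u' volume c d :=
    (continuousOn_const.mul (hcont β)).intervalIntegrable
  have hiv : IntervalIntegrable v' volume c d := by
    apply ContinuousOn.intervalIntegrable
    exact (Real.continuous_sin.comp_continuousOn (hcont (-b))).neg.mul
      (continuousOn_const.mul (hcont (-b - 1)))
  have key := intervalIntegral.integral_mul_deriv_eq_deriv_mul hdu hdv hiu hiv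
  have e1 : ∫ x in c..d, (1 - x) ^ (β - b) * Real.sin (1 / (1 - x) ^ b)
      = ∫ x in c..d, u x * v' x := by
    apply intervalIntegral.integral_congr
    intro x hx
    have hx0 := hpos x hx
    simp only [hu, hv']
    rw [show β - b = (1 + β) + (-b - 1) by ring, Real.rpow_add hx0, one_div,
      ← Real.rpow_neg hx0.le]
    field_simp
  rw [e1, key]
  have hub : ∀ x ∈ Set.uIcc c d, |u x * v x| ≤ 1 / b * L ^ (1 + β) := by
    intro x hx
    have hx0 := hpos x hx
    simp only [hu, hv]
    rw [abs_mul, abs_mul, abs_neg, abs_of_pos (by positivity : 0 < 1 / b),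
      abs_of_pos (by positivity : 0 < (1 - x) ^ (1 + β))]
    calc _ ≤ 1 / b * (1 - x) ^ (1 + β) * 1 := by
          gcongr
          exact Real.abs_cos_le_one _
      _ ≤ _ := by
          rw [mul_one]
          gcongr
          exact hleL x hx
  have hint : |∫ x in c..d, u' x * v x| ≤ (1 + β) / b * L ^ β * |d - c| := by
    rw [← Real.norm_eq_abs]
    apply intervalIntegral.norm_integral_le_of_norm_le_const
    intro x hx
    have hx' := Set.uIoc_subset_uIcc hx
    have hx0 := hpos x hx'
    simp only [hu', hv]
    rw [Real.norm_eq_abs, abs_mul, abs_of_pos (by positivity : 0 < (1 + β) / b * (1 - x) ^ β)]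
    calc _ ≤ (1 + β) / b * (1 - x) ^ β * 1 := by
          gcongr
          exact Real.abs_cos_le_one _
      _ ≤ _ := by
          rw [mul_one]
          gcongr
          exact hleL x hx'
  have hdc : |d - c| ≤ L := by
    rw [abs_of_nonneg (by linarith)]
    linarith
  have hint2 : |∫ x in c..d, u' x * v x| ≤ (1 + β) / b * L ^ (1 + β) := by
    refine hint.trans ?_
    rw [Real.rpow_add hL, Real.rpow_one]
    calc _ ≤ (1 + β) / b * L ^ β * L := by gcongr
      _ = _ := by ring
  have h1 := hub d Set.right_mem_uIcc
  have h2 := hub c Set.left_mem_uIcc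
  have e3 : (3 + β) / b * L ^ (1 + β) =
    1 / b * L ^ (1 + β) + 1 / b * L ^ (1 + β) + (1 + β) / b * L ^ (1 + β) := by ring
  rw [e3]
  refine (abs_sub _ _).trans (add_le_add ((abs_sub _ _).trans (add_le_add h1 h2)) hint2)

lemma osc_bound (b β L d : ℝ) (hβ : 0 < β) (hbβ : β ≤ b) (hL : 0 < L) (hd : d < 1)
    (I : Set ℝ) (hI : I.OrdConnected) (hsub : I ⊆ Set.Icc (1 - L) d) :
    |∫ x in I, (1 - x) ^ (β - b) * Real.sin (1 / (1 - x) ^ b)| ≤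
      ((3 + β) / b) * L ^ (1 + β) := by
  have hb : 0 < b := by linarith
  rcases I.eq_empty_or_nonempty with rfl | hne
  · simp only [Measure.restrict_empty, integral_zero_measure, abs_zero]
    positivity
  have hba : BddAbove I := bddAbove_Icc.mono hsub
  have hbb : BddBelow I := bddBelow_Icc.mono hsub
  have h1 : I ⊆ Set.Icc (sInf I) (sSup I) := fun x hx => ⟨csInf_le hbb hx, le_csSup hba hx⟩
  have h2 : Set.Ioo (sInf I) (sSup I) ⊆ I := by
    intro x hx
    obtain ⟨y, hy, hyx⟩ := exists_lt_of_csInf_lt hne hx.1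
    obtain ⟨w, hw, hxw⟩ := exists_lt_of_lt_csSup hne hx.2
    exact hI.out hy hw ⟨hyx.le, hxw.le⟩
  have hae : I =ᵐ[volume] Set.Ioc (sInf I) (sSup I) := by
    have := Ioo_ae_eq_Ioc (μ := volume) (a := sInf I) (b := sSup I)
    have h3 := Ioo_ae_eq_Icc (μ := volume) (a := sInf I) (b := sSup I)
    refine Filter.EventuallyEq.trans ?_ this
    apply Filter.EventuallyLE.antisymm
    · exact Filter.EventuallyLE.trans (LE.le.eventuallyLE h1) h3.symm.le
    · exact LE.le.eventuallyLE h2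
  have hle : sInf I ≤ sSup I := csInf_le_csSup hne hbb hba
  rw [setIntegral_congr_set hae, ← intervalIntegral.integral_of_le hle]
  apply osc_bound_Ioo b β L _ _ hβ hbβ _ hle
  · exact (csSup_le hne fun x hx => (hsub hx).2).trans_lt hd
  · exact le_csInf hne fun x hx => (hsub hx).1

lemma tanh_one_pos : 0 < Real.tanh 1 := by
  rw [Real.tanh_eq_sinh_div_cosh]
  exact div_pos (Real.sinh_pos_iff.2 one_pos) (Real.cosh_pos 1)

lemma measurableSet_Dball (z : ℂ) : MeasurableSet (Dball z) := by
  have h1 : Measurable fun w : ℂ => ‖w‖ := measurable_norm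
  have h2 : Measurable fun w : ℂ => ‖(z - w) / (1 - (starRingEnd ℂ) w * z)‖ := by
    have : Measurable fun w : ℂ => (starRingEnd ℂ) w := Complex.continuous_conj.measurable
    fun_prop
  exact (measurableSet_lt h1 measurable_const).inter (measurableSet_lt h2 measurable_const)

lemma ball_subset_Dball (z : ℂ) (hz : ‖z‖ < 1) :
    Metric.ball z (Real.tanh 1 * (1 - ‖z‖)) ⊆ Dball z := by
  intro w hw
  have hs := Real.tanh_lt_one 1
  have hs0 := tanh_one_pos
  rw [Metric.mem_ball, dist_eq_norm] at hw
  have hw1 : ‖w‖ < 1 := by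
    have : ‖w‖ ≤ ‖w - z‖ + ‖z‖ := by simpa using norm_add_le (w - z) z
    nlinarith
  have h2 : 1 - ‖z‖ ≤ ‖1 - (starRingEnd ℂ) w * z‖ := by
    have h3 : ‖(1:ℂ)‖ - ‖(starRingEnd ℂ) w * z‖ ≤ ‖1 - (starRingEnd ℂ) w * z‖ :=
      norm_sub_norm_le _ _
    rw [norm_mul, RCLike.norm_conj, norm_one] at h3
    nlinarith [norm_nonneg z, norm_nonneg w]
  refine ⟨hw1, ?_⟩
  rw [norm_div, div_lt_iff₀ (by linarith), norm_sub_rev]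
  nlinarith

lemma dA_Dball_lower (z : ℂ) (hz : ‖z‖ < 1) :
    (Real.tanh 1 * (1 - ‖z‖)) ^ 2 ≤ (dA (Dball z)).toReal := by
  have hs0 := tanh_one_pos
  have hpi : ENNReal.ofReal Real.pi ≠ 0 := by simpa using Real.pi_pos
  have hball : ∀ (a : ℂ) (r : ℝ), dA (Metric.ball a r) = ENNReal.ofReal r ^ 2 := by
    intro a r
    have : (NNReal.pi : ENNReal) = ENNReal.ofReal Real.pi := by
      rw [← NNReal.coe_real_pi, ENNReal.ofReal_coe_nnreal]
    rw [dA, Measure.smul_apply, Complex.volume_ball, this, smul_eq_mul, mul_comm, mul_assoc,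
      ENNReal.mul_inv_cancel hpi ENNReal.ofReal_ne_top, mul_one]
  have hfin : dA (Dball z) ≠ ⊤ := by
    have : dA (Dball z) ≤ dA (Metric.ball 0 1) := by
      apply measure_mono
      intro w hw
      simpa using hw.1
    rw [hball] at this
    exact (this.trans_lt (by simp)).ne
  have h := ENNReal.toReal_mono hfin (measure_mono (μ := dA) (ball_subset_Dball z hz))
  rw [hball, ENNReal.toReal_pow, ENNReal.toReal_ofReal] at h
  · exact h
  · have : 0 < 1 - ‖z‖ := by linarith
    positivity

lemma setIntegral_Dball_rotate (b β : ℝ) (z : ℂ) (hz : z ≠ 0) :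
    ∫ w in Dball z, fEx b β w = ∫ w in Dball (‖z‖ : ℂ), fEx b β w := by
  have hn : ‖z‖ ≠ 0 := norm_ne_zero_iff.2 hz
  obtain ⟨a, ha⟩ : ∃ a : Circle, (a : ℂ) * ‖z‖ = z := by
    refine ⟨Circle.exp (Complex.arg z), ?_⟩
    rw [Circle.coe_exp, mul_comm]
    exact Complex.norm_mul_exp_arg_mul_I z
  have hmp := (rotation a).measurePreserving
  have hem : MeasurableEmbedding (rotation a) :=
    (rotation a).toHomeomorph.measurableEmbedding
  rw [← hmp.setIntegral_preimage_emb hem]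
  have hpre : (rotation a) ⁻¹' Dball z = Dball (‖z‖ : ℂ) := by
    ext w
    have haa : (starRingEnd ℂ) (a : ℂ) * a = 1 := by
      rw [← Complex.normSq_eq_conj_mul_self]; simp
    have e1 : z - a * w = a * (‖z‖ - w) := by rw [mul_sub, ha]
    have e2 : (starRingEnd ℂ) ((a : ℂ) * w) * z = (starRingEnd ℂ) w * ‖z‖ := by
      rw [map_mul]
      conv_lhs => rw [← ha]
      linear_combination (starRingEnd ℂ) w * ‖z‖ * haa
    simp only [Dball, Set.mem_preimage, Set.mem_ofPred_eq, rotation_apply]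
    rw [e1, e2, mul_div_assoc, norm_mul, norm_mul, Circle.norm_coe, one_mul, one_mul]
  rw [hpre]
  congr 1
  ext w
  simp only [fEx, rotation_apply, norm_mul, Circle.norm_coe, one_mul]

lemma mem_Dball_polar (r ρ θ : ℝ) (hr0 : 0 < r) (hr : r < 1) (hρ : 0 < ρ) :
    Complex.polarCoord.symm (ρ, θ) ∈ Dball (r : ℂ) ↔
      ρ < 1 ∧ r ^ 2 - 2 * r * ρ * Real.cos θ + ρ ^ 2 <
        Real.tanh 1 ^ 2 * (1 - 2 * r * ρ * Real.cos θ + r ^ 2 * ρ ^ 2) := by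
  have hn : ‖Complex.polarCoord.symm (ρ, θ)‖ = ρ := by
    rw [Complex.norm_polarCoord_symm, abs_of_pos hρ]
  have hs0 := tanh_one_pos
  set w := Complex.polarCoord.symm (ρ, θ) with hw
  have hre : w.re = ρ * Real.cos θ := by
    rw [hw, Complex.polarCoord_symm_apply]; simp [← Complex.ofReal_cos, ← Complex.ofReal_sin, -Complex.ofReal_cos, -Complex.ofReal_sin]
  have him : w.im = ρ * Real.sin θ := by
    rw [hw, Complex.polarCoord_symm_apply]; simp [← Complex.ofReal_cos, ← Complex.ofReal_sin, -Complex.ofReal_cos, -Complex.ofReal_sin]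
  have hsc := Real.sin_sq_add_cos_sq θ
  have e1 : ‖(r : ℂ) - w‖ ^ 2 = r ^ 2 - 2 * r * ρ * Real.cos θ + ρ ^ 2 := by
    rw [← Complex.normSq_eq_norm_sq, Complex.normSq_apply]
    simp only [Complex.sub_re, Complex.sub_im, Complex.ofReal_re, Complex.ofReal_im, hre, him]
    linear_combination ρ ^ 2 * hsc
  have e2 : ‖1 - (starRingEnd ℂ) w * (r : ℂ)‖ ^ 2 =
      1 - 2 * r * ρ * Real.cos θ + r ^ 2 * ρ ^ 2 := by
    rw [← Complex.normSq_eq_norm_sq, Complex.normSq_apply]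
    simp only [Complex.sub_re, Complex.sub_im, Complex.ofReal_re, Complex.ofReal_im, hre, him,
      Complex.mul_re, Complex.mul_im, Complex.conj_re, Complex.conj_im, Complex.one_re,
      Complex.one_im]
    linear_combination ρ ^ 2 * r ^ 2 * hsc
  simp only [Dball, Set.mem_ofPred_eq, hn]
  apply and_congr_right
  intro hρ1
  have hpos : 0 < ‖1 - (starRingEnd ℂ) w * (r : ℂ)‖ := by
    have h3 : ‖(1:ℂ)‖ - ‖(starRingEnd ℂ) w * r‖ ≤ ‖1 - (starRingEnd ℂ) w * (r : ℂ)‖ :=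
      norm_sub_norm_le _ _
    rw [norm_mul, RCLike.norm_conj, norm_one, hn, Complex.norm_real, Real.norm_eq_abs,
      abs_of_pos hr0] at h3
    nlinarith
  rw [norm_div, div_lt_iff₀ hpos, ← e1, ← e2, ← mul_pow]
  exact (pow_lt_pow_iff_left₀ (norm_nonneg _) (by positivity) two_ne_zero).symm

lemma slice_ordConnected (r c s : ℝ) (hs0 : 0 < s) (hs : s < 1) (hr0 : 0 < r) (hr : r < 1) :
    Set.OrdConnected {ρ : ℝ | 0 < ρ ∧ ρ < 1 ∧ r ^ 2 - 2 * r * ρ * c + ρ ^ 2 <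
        s ^ 2 * (1 - 2 * r * ρ * c + r ^ 2 * ρ ^ 2)} := by
  constructor
  rintro x ⟨hx0, hx1, hx⟩ y ⟨hy0, hy1, hy⟩ w ⟨hxw, hwy⟩
  refine ⟨by linarith, by linarith, ?_⟩
  have hA : 0 < 1 - s ^ 2 * r ^ 2 := by
    have : s * r < 1 := by nlinarith
    have : 0 < s * r := by positivity
    nlinarith
  rcases eq_or_lt_of_le (hxw.trans hwy) with h | h
  · have : w = x := by linarith
    rw [this]; exact hx
  by_contra hcon
  push Not at hcon
  have h1 : 0 ≤ (1 - s ^ 2 * r ^ 2) * ((w - x) * (y - w) * (y - x)) := by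
    have a1 : 0 ≤ w - x := by linarith
    have a2 : 0 ≤ y - w := by linarith
    have a3 : 0 ≤ y - x := by linarith
    positivity
  rcases eq_or_lt_of_le hxw with h2 | h2
  · subst h2; linarith
  have h3 : 0 < (w - x) := by linarith
  have h4 : 0 ≤ y - w := by linarith
  have h5 : 0 < y - x := by linarith
  nlinarith [mul_nonneg h5.le (sub_nonneg.2 hcon), mul_pos h3 (sub_pos.2 hy),
    mul_nonneg h4 (sub_pos.2 hx).le]

lemma slice_bounds (r ρ θ s : ℝ) (hs0 : 0 < s) (hs : s < 1)
    (hr0 : 1 - (1 - s) / 4 ≤ r) (hr : r < 1) (hρ0 : 0 < ρ) (hρ1 : ρ < 1) (hθ : |θ| ≤ Real.pi)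
    (h : r ^ 2 - 2 * r * ρ * Real.cos θ + ρ ^ 2 <
        s ^ 2 * (1 - 2 * r * ρ * Real.cos θ + r ^ 2 * ρ ^ 2)) :
    1 - (2 / (1 - s)) * (1 - r) ≤ ρ ∧ ρ ≤ 1 - (1 - s) / 2 * (1 - r) ∧ 1 / 2 ≤ ρ ∧
      |θ| ≤ (4 * Real.pi / (1 - s) ^ 2) * (1 - r) := by
  have hc := Real.cos_le_one θ
  have hc2 := Real.cos_le_one_sub_mul_cos_sq hθ
  have hr1 : 3 / 4 < r := by linarith
  have ht : 0 < 1 - s := by linarith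
  have hrρ : r * ρ < 1 := by nlinarith
  have h0 : (r - ρ) ^ 2 + 2 * ((1 - s ^ 2) * ((r * ρ) * (1 - Real.cos θ))) <
      (s * (1 - r * ρ)) ^ 2 := by nlinarith
  have hss : 0 < 1 - s ^ 2 := by nlinarith
  have hnn : 0 ≤ (1 - s ^ 2) * ((r * ρ) * (1 - Real.cos θ)) := by
    have : 0 ≤ 1 - Real.cos θ := by linarith
    positivity
  have h1 : |r - ρ| < s * (1 - r * ρ) := by
    apply abs_lt_of_sq_lt_sq (by linarith)
    have : 0 < 1 - r * ρ := by linarith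
    positivity
  rw [abs_lt] at h1
  have hK : 1 - (2 / (1 - s)) * (1 - r) ≤ ρ := by
    rw [div_mul_eq_mul_div, sub_le_iff_le_add, ← sub_le_iff_le_add', le_div_iff₀ ht]
    nlinarith [mul_pos hs0 (sub_pos.2 hρ1), mul_pos hs0 (sub_pos.2 hr),
      mul_pos (mul_pos hs0 (sub_pos.2 hρ1)) (sub_pos.2 hr)]
  have hhalf : 1 / 2 ≤ ρ := by
    have : (2 / (1 - s)) * (1 - r) ≤ 1 / 2 := by
      rw [div_mul_eq_mul_div, div_le_iff₀ ht]
      linarith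
    linarith
  refine ⟨hK, ?_, hhalf, ?_⟩
  · nlinarith [mul_pos hs0 (sub_pos.2 hρ1), mul_pos hs0 (sub_pos.2 hr),
      mul_pos (mul_pos hs0 (sub_pos.2 hρ1)) (sub_pos.2 hr)]
  · have hpi := Real.pi_pos
    have h3 : 1 - r * ρ ≤ (4 / (1 - s)) * (1 - r) := by
      have e : (4 / (1 - s)) * (1 - r) = (2 / (1 - s)) * (1 - r) + (2 / (1 - s)) * (1 - r) := by
        ring
      have h4 : 1 - r ≤ (2 / (1 - s)) * (1 - r) := by
        rw [div_mul_eq_mul_div, le_div_iff₀ ht]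
        nlinarith
      have h9 : ρ * (1 - r) ≤ 1 * (1 - r) := by gcongr
      linarith
    have h5 : (1 - s) * (1 / 4 * (2 / Real.pi ^ 2 * θ ^ 2)) ≤
        (1 - s ^ 2) * ((r * ρ) * (1 - Real.cos θ)) := by
      have a1 : 1 - s ≤ 1 - s ^ 2 := by nlinarith
      have a2 : 1 / 4 ≤ r * ρ := by nlinarith
      have a3 : 2 / Real.pi ^ 2 * θ ^ 2 ≤ 1 - Real.cos θ := by linarith
      gcongr
    have h6 : (s * (1 - r * ρ)) ^ 2 ≤ ((4 / (1 - s)) * (1 - r)) ^ 2 := by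
      have : 0 < 1 - r * ρ := by linarith
      apply pow_le_pow_left₀ (by positivity)
      have h9 : s * (1 - r * ρ) ≤ 1 * (1 - r * ρ) := by gcongr
      linarith
    have h7 : (1 - s) * (1 / Real.pi ^ 2 * θ ^ 2) ≤ ((4 / (1 - s)) * (1 - r)) ^ 2 := by
      have h9 : (1 - s) * (1 / 4 * (2 / Real.pi ^ 2 * θ ^ 2)) * 2 =
        (1 - s) * (1 / Real.pi ^ 2 * θ ^ 2) := by ring
      linarith [sq_nonneg (r - ρ)]
    have ht1 : 0 < 1 - r := by linarith
    apply abs_le_of_sq_le_sq _ (by positivity)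
    have h8 : (1 - s) ^ 2 * (1 / Real.pi ^ 2 * θ ^ 2) ≤ ((4 / (1 - s)) * (1 - r)) ^ 2 := by
      refine le_trans ?_ h7
      have : (1 - s) ^ 2 ≤ 1 - s := by nlinarith
      gcongr
    calc θ ^ 2 = (Real.pi / (1 - s)) ^ 2 * ((1 - s) ^ 2 * (1 / Real.pi ^ 2 * θ ^ 2)) := by
          field_simp
      _ ≤ (Real.pi / (1 - s)) ^ 2 * ((4 / (1 - s)) * (1 - r)) ^ 2 := by gcongr
      _ = _ := by field_simp

lemma integral_real_bound (b β r : ℝ) (hβ : 0 < β) (hbβ : β ≤ b)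
    (hr0 : 1 - (1 - Real.tanh 1) / 4 ≤ r) (hr : r < 1) :
    |∫ w in Dball (r : ℂ), fEx b β w| ≤
      (2 * (4 * Real.pi / (1 - Real.tanh 1) ^ 2) *
        ((3 + β) / b * (2 / (1 - Real.tanh 1)) ^ (1 + β))) * (1 - r) ^ (2 + β) := by
  have hb : 0 < b := by linarith
  have hs := Real.tanh_lt_one 1
  have hs0 := tanh_one_pos
  set s := Real.tanh 1 with hsdef
  have hst : 0 < 1 - s := by linarith
  have ht : 0 < 1 - r := by linarith
  have hrpos : 0 < r := by linarith
  have hpi := Real.pi_pos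
  set K := 2 / (1 - s) with hK
  have hKpos : 0 < K := by positivity
  set M := 4 * Real.pi / (1 - s) ^ 2 with hM
  have hMpos : 0 < M := by positivity
  set A := (3 + β) / b * (K * (1 - r)) ^ (1 + β) with hA
  have hApos : 0 < A := by positivity
  have hrhs : (2 * M * ((3 + β) / b * K ^ (1 + β))) * (1 - r) ^ (2 + β) =
      (2 * (M * (1 - r))) * A := by
    rw [hA, Real.mul_rpow hKpos.le ht.le, show 2 + β = 1 + (1 + β) by ring,
      Real.rpow_add ht 1 (1 + β), Real.rpow_one]
    ring
  rw [hrhs, ← integral_indicator (measurableSet_Dball _), ← Complex.integral_comp_polarCoord_symm,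
    ← integral_indicator polarCoord.open_target.measurableSet]
  set G : ℝ × ℝ → ℝ := polarCoord.target.indicator
    (fun p => p.1 • (Dball (r : ℂ)).indicator (fEx b β) (Complex.polarCoord.symm p)) with hG
  by_cases hint : Integrable G (volume.prod volume)
  swap
  · rw [Measure.volume_eq_prod, integral_undef hint, abs_zero]
    positivity
  rw [Measure.volume_eq_prod, integral_prod_symm _ hint, ← Real.norm_eq_abs]
  have hbound : ∀ θ : ℝ, ‖∫ ρ, G (ρ, θ)‖ ≤
      (Set.Icc (-(M * (1 - r))) (M * (1 - r))).indicator (fun _ => A) θ := by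
    intro θ
    set I : Set ℝ := {ρ : ℝ | 0 < ρ ∧ ρ < 1 ∧ r ^ 2 - 2 * r * ρ * Real.cos θ + ρ ^ 2 <
        s ^ 2 * (1 - 2 * r * ρ * Real.cos θ + r ^ 2 * ρ ^ 2)} with hI
    have hIord : I.OrdConnected := slice_ordConnected r (Real.cos θ) s hs0 hs hrpos hr
    have hnonneg : 0 ≤ (Set.Icc (-(M * (1 - r))) (M * (1 - r))).indicator (fun _ => A) θ :=
      Set.indicator_nonneg (fun _ _ => hApos.le) _
    by_cases hθ : θ ∈ Set.Ioo (-Real.pi) Real.pi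
    swap
    · have : ∀ ρ, G (ρ, θ) = 0 := by
        intro ρ
        apply Set.indicator_of_notMem
        rintro ⟨-, h2⟩
        exact hθ h2
      simpa [this] using hnonneg
    have hθ' : |θ| ≤ Real.pi := abs_le.2 ⟨hθ.1.le, hθ.2.le⟩
    have hbd : ∀ ρ ∈ I, 1 - K * (1 - r) ≤ ρ ∧ ρ ≤ 1 - (1 - s) / 2 * (1 - r) ∧ 1 / 2 ≤ ρ ∧
      |θ| ≤ M * (1 - r) := fun ρ hρ =>
        slice_bounds r ρ θ s hs0 hs hr0 hr hρ.1 hρ.2.1 hθ' hρ.2.2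
    have hGI : (fun ρ => G (ρ, θ)) =
        I.indicator (fun x => (1 - x) ^ (β - b) * Real.sin (1 / (1 - x) ^ b)) := by
      funext ρ
      by_cases hρ : ρ ∈ I
      · have hmem : (ρ, θ) ∈ polarCoord.target := ⟨hρ.1, hθ⟩
        have hD := (mem_Dball_polar r ρ θ hrpos hr hρ.1).2 hρ.2
        rw [hG, Set.indicator_of_mem hmem, Set.indicator_of_mem hD, Set.indicator_of_mem hρ]
        have hn : ‖Complex.polarCoord.symm (ρ, θ)‖ = ρ := by
          rw [Complex.norm_polarCoord_symm, abs_of_pos hρ.1]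
        have h1 : 0 < 1 - ρ := by linarith [hρ.2.1]
        have h2 := hρ.1
        simp only [fEx, hn]
        rw [if_neg (not_lt.2 (hbd ρ hρ).2.2.1), smul_eq_mul,
          show β - b = -(b - β) by ring, Real.rpow_neg h1.le]
        field_simp
      · rw [Set.indicator_of_notMem hρ]
        by_cases hmem : (ρ, θ) ∈ polarCoord.target
        · have hρ0 : 0 < ρ := hmem.1
          have hD : Complex.polarCoord.symm (ρ, θ) ∉ Dball (r : ℂ) := fun h =>
            hρ ⟨hρ0, (mem_Dball_polar r ρ θ hrpos hr hρ0).1 h⟩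
          rw [hG, Set.indicator_of_mem hmem, Set.indicator_of_notMem hD, smul_zero]
        · exact Set.indicator_of_notMem hmem _
    rw [hGI, integral_indicator hIord.measurableSet]
    by_cases hθM : |θ| ≤ M * (1 - r)
    · rw [Set.indicator_of_mem (Set.mem_Icc.2 (abs_le.1 hθM)), Real.norm_eq_abs]
      apply osc_bound b β (K * (1 - r)) (1 - (1 - s) / 2 * (1 - r)) hβ hbβ (by positivity) _ I hIord
      · intro ρ hρ
        exact ⟨(hbd ρ hρ).1, (hbd ρ hρ).2.1⟩
      · have : 0 < (1 - s) / 2 * (1 - r) := by positivity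
        linarith
    · have : I = ∅ := Set.eq_empty_of_forall_notMem fun ρ hρ => hθM (hbd ρ hρ).2.2.2
      rw [this]
      simpa using hnonneg
  refine (norm_integral_le_of_norm_le ?_ (Filter.Eventually.of_forall hbound)).trans ?_
  · exact (integrable_indicator_iff measurableSet_Icc).2
      (integrableOn_const (by simp [Real.volume_Icc]))
  · rw [integral_indicator measurableSet_Icc, setIntegral_const, Measure.real, Real.volume_Icc,
      ENNReal.toReal_ofReal (by nlinarith [mul_pos hMpos ht]), smul_eq_mul]
    apply le_of_eq
    ring

lemma integral_bound (b β : ℝ) (hβ : 0 < β) (hbβ : β ≤ b) :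
    ∃ C > (0:ℝ), ∀ z : ℂ, 1 - (1 - Real.tanh 1) / 4 ≤ ‖z‖ → ‖z‖ < 1 →
        |∫ w in Dball z, fEx b β w ∂dA| ≤ C * (1 - ‖z‖) ^ (2 + β) := by
  have hb : 0 < b := by linarith
  have hs := Real.tanh_lt_one 1
  have hs0 := tanh_one_pos
  have hst : 0 < 1 - Real.tanh 1 := by linarith
  have hpi := Real.pi_pos
  refine ⟨(2 * (4 * Real.pi / (1 - Real.tanh 1) ^ 2) *
        ((3 + β) / b * (2 / (1 - Real.tanh 1)) ^ (1 + β))), by positivity, ?_⟩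
  intro z hz0 hz
  have hzne : z ≠ 0 := by
    rintro rfl
    rw [norm_zero] at hz0
    linarith
  have h := integral_real_bound b β ‖z‖ hβ hbβ hz0 hz
  rw [← setIntegral_Dball_rotate b β z hzne] at h
  refine le_trans ?_ h
  rw [dA, Measure.restrict_smul, integral_smul_measure, smul_eq_mul, abs_mul, ENNReal.toReal_inv,
    ENNReal.toReal_ofReal hpi.le, abs_of_pos (by positivity)]
  apply mul_le_of_le_one_left (abs_nonneg _)
  exact inv_le_one_of_one_le₀ (by linarith [Real.pi_gt_three])

/-- For `b ≥ β > 0` and the example symbol `f = fEx b β`, there exist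
`r₀ ∈ (0,1)` and `C > 0` such that `|∫_{D(z,1)} f dA| ≤ C (1-r)^{2+β}` whenever
`r = |z| ≥ r₀`; in particular the hyperbolic average satisfies
`|f̂₁(z)| ≤ C' (1-r)^β` for some `C' > 0`, so `f̂₁(z) → 0` as `|z| → 1`. -/
theorem example_hyperbolic_average (b β : ℝ) (hβ : 0 < β) (hbβ : β ≤ b) :
    ∃ r₀ ∈ Set.Ioo (0:ℝ) 1, ∃ C > (0:ℝ),
      (∀ z : ℂ, r₀ ≤ ‖z‖ → ‖z‖ < 1 →
        |∫ w in Dball z, fEx b β w ∂dA| ≤ C * (1 - ‖z‖) ^ (2 + β)) ∧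
      ∃ C' > (0:ℝ),
        (∀ z : ℂ, r₀ ≤ ‖z‖ → ‖z‖ < 1 →
          |avg1 (fEx b β) z| ≤ C' * (1 - ‖z‖) ^ β) ∧
        (∀ ε > (0:ℝ), ∃ r₁ < (1:ℝ), ∀ z : ℂ, r₁ ≤ ‖z‖ → ‖z‖ < 1 →
          |avg1 (fEx b β) z| ≤ ε) := by
  obtain ⟨C, hC, hbd⟩ := integral_bound b β hβ hbβ
  have hs := Real.tanh_lt_one 1
  have hs0 := tanh_one_pos
  refine ⟨1 - (1 - Real.tanh 1) / 4, ⟨by linarith, by linarith⟩, C, hC, hbd,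
    C / Real.tanh 1 ^ 2, by positivity, ?_⟩
  have havg : ∀ z : ℂ, 1 - (1 - Real.tanh 1) / 4 ≤ ‖z‖ → ‖z‖ < 1 →
      |avg1 (fEx b β) z| ≤ C / Real.tanh 1 ^ 2 * (1 - ‖z‖) ^ β := by
    intro z hz0 hz
    have ht : 0 < 1 - ‖z‖ := by linarith
    have h1 := hbd z hz0 hz
    have h2 := dA_Dball_lower z hz
    have h3 : 0 < (Real.tanh 1 * (1 - ‖z‖)) ^ 2 := by positivity
    rw [avg1, abs_mul, abs_of_nonneg (inv_nonneg.2 ENNReal.toReal_nonneg)]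
    calc _ ≤ ((Real.tanh 1 * (1 - ‖z‖)) ^ 2)⁻¹ * (C * (1 - ‖z‖) ^ (2 + β)) := by gcongr
      _ = _ := by
        rw [Real.rpow_add ht, Real.rpow_two]
        field_simp
  refine ⟨havg, ?_⟩
  intro ε hε
  set D := C / Real.tanh 1 ^ 2 with hD
  have hDpos : 0 < D := by positivity
  have hq : 0 < (ε / D) ^ (1 / β) := by positivity
  refine ⟨max (1 - (1 - Real.tanh 1) / 4) (1 - (ε / D) ^ (1 / β)),
    max_lt (by linarith) (by linarith), ?_⟩
  intro z hz0 hz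
  have h1 := le_of_max_le_left hz0
  have h2 := le_of_max_le_right hz0
  have ht : 0 < 1 - ‖z‖ := by linarith
  refine (havg z h1 hz).trans ?_
  calc D * (1 - ‖z‖) ^ β ≤ D * ((ε / D) ^ (1 / β)) ^ β := by
        gcongr
        linarith
    _ = ε := by
        rw [← Real.rpow_mul (by positivity), one_div_mul_cancel hβ.ne', Real.rpow_one]
        field_simp
end
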